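/- arXiv:1407.1222 — 6 statements merged into one kernel-verified Lean document; each statement's English description precedes it below -/
import Mathlib

section
/- Assume the Riemann hypothesis. Then there exist real constants C₁ and C₂ such that for all real x ≥ 2, Σ_{m ≤ x} Σ_{n ≤ x} τ_{1,2}(m·n) = C₁·x² + C₂·x^{3/2} + O(x^{7/5+ε}) for every ε > 0. -/
open Filter Asymptotics

/-- `τ_{1,2}(n)` is the number of ordered pairs `(a,b)` of positive integers with `a·b² = n`. -/
noncomputable def tau12 (n : ℕ) : ℕ :=
  Nat.card {q : ℕ × ℕ // 0 < q.1 ∧ 0 < q.2 ∧ q.1 * q.2 ^ 2 = n}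

/-!
The numbers `τ_{1,2}(mn)` have the double Dirichlet series
`ζ(s) ζ(2s) ζ(t) ζ(2t) ∏ₚ (1 + p^(-s-t) - p^(-2s-t) - p^(-s-2t))`, so their sum over `m, n ≤ x` is a
signed sum of products `T(x/i) T(x/j)`, where `T(y) = ∑_{n ≤ y} τ_{1,2}(n)` and `(i, j)` runs over
the pairs occurring in the Euler product. Dirichlet's hyperbola method, applied to the region
`{a b² ≤ y}` cut at `a, b = y^(1/3)`, gives `T(y) = A y + B y^(1/2) + O(y^(1/3))`, and hence also
`T(y) = A y + O(y^(2/3))` for all `y > 0`. Expanding the products, the main terms have orders `x²`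
and `x^(3/2)`, with the values of the Euler product at `(1, 1)`, `(1, 1/2)`, `(1/2, 1)` as
coefficients; the errors are `O(x^(4/3))` because the Euler product converges absolutely for
`Re s, Re t ≥ 0`, `Re (s + t) > 1`, which includes `(1, 1/3)`, `(1/3, 1)` and `(2/3, 2/3)`.
-/

section Multiplicativity

variable {n N : ℕ}

theorem tau12_eq_card_filter (hn : n ≠ 0) (hN : n ≤ N) :
    tau12 n = ((Finset.Icc 1 N ×ˢ Finset.Icc 1 N).filter
      fun q : ℕ × ℕ => q.1 * q.2 ^ 2 = n).card := by
  refine Nat.subtype_card _ ?_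
  rintro ⟨a, b⟩
  simp only [Finset.mem_filter, Finset.mem_product, Finset.mem_Icc]
  refine ⟨fun ⟨⟨⟨ha, _⟩, hb, _⟩, h⟩ => ⟨ha, hb, h⟩, fun ⟨ha, hb, h⟩ => ⟨⟨⟨ha, ?_⟩, hb, ?_⟩, h⟩⟩
  · exact (Nat.le_of_dvd (by omega) ⟨b ^ 2, h.symm⟩).trans hN
  · exact (Nat.le_of_dvd (by omega) ⟨a * b, by rw [← h]; ring⟩).trans hN

theorem factorization_sq_mul_div_two {a r : ℕ} (ha : Squarefree a) (hr : r ≠ 0) (p : ℕ) :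
    (r ^ 2 * a).factorization p / 2 = r.factorization p := by
  have := ha.natFactorization_le_one p
  rw [Nat.factorization_mul (pow_ne_zero 2 hr) ha.ne_zero, Nat.factorization_pow]
  simp only [Finsupp.add_apply, Finsupp.smul_apply, smul_eq_mul]
  omega

theorem sq_dvd_sq_mul_iff_of_squarefree {a r b : ℕ} (ha : Squarefree a) (hr : r ≠ 0)
    (hb : b ≠ 0) : b ^ 2 ∣ r ^ 2 * a ↔ b ∣ r := by
  rw [← Nat.factorization_le_iff_dvd (pow_ne_zero 2 hb)
      (mul_ne_zero (pow_ne_zero 2 hr) ha.ne_zero),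
    ← Nat.factorization_le_iff_dvd hb hr, Finsupp.le_def, Finsupp.le_def]
  refine forall_congr' fun p => ?_
  rw [← factorization_sq_mul_div_two ha hr p, Nat.factorization_pow, Finsupp.smul_apply,
    smul_eq_mul, Nat.le_div_iff_mul_le two_pos, mul_comm]

theorem tau12_sq_mul_of_squarefree {a r : ℕ} (ha : Squarefree a) (hr : r ≠ 0) :
    tau12 (r ^ 2 * a) = r.divisors.card := by
  have hn : r ^ 2 * a ≠ 0 := mul_ne_zero (pow_ne_zero 2 hr) ha.ne_zero
  have hinj : Function.Injective fun b => (r ^ 2 * a / b ^ 2, b) := fun _ _ h =>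
    (Prod.ext_iff.1 h).2
  rw [tau12, ← Finset.card_map ⟨_, hinj⟩]
  refine Nat.subtype_card _ ?_
  rintro ⟨c, b⟩
  simp only [Finset.mem_map, Function.Embedding.coeFn_mk, Nat.mem_divisors, Prod.mk.injEq]
  constructor
  · rintro ⟨b, ⟨hbr, -⟩, rfl, rfl⟩
    have hb : b ≠ 0 := ne_zero_of_dvd_ne_zero hr hbr
    have hdvd := (sq_dvd_sq_mul_iff_of_squarefree ha hr hb).2 hbr
    exact ⟨Nat.pos_of_ne_zero ((Nat.div_ne_zero_iff_of_dvd hdvd).2 ⟨hn, pow_ne_zero 2 hb⟩),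
      Nat.pos_of_ne_zero hb, Nat.div_mul_cancel hdvd⟩
  · rintro ⟨-, hb, h⟩
    exact ⟨b, ⟨(sq_dvd_sq_mul_iff_of_squarefree ha hr hb.ne').1 ⟨c, by rw [← h, mul_comm]⟩, hr⟩,
      by rw [← h, Nat.mul_div_cancel _ (pow_pos hb 2)], rfl⟩

theorem tau12_eq_prod_primeFactors (hn : n ≠ 0) :
    tau12 n = ∏ p ∈ n.primeFactors, (n.factorization p / 2 + 1) := by
  obtain ⟨a, r, rfl, ha⟩ := Nat.sq_mul_squarefree n
  have hr : r ≠ 0 := by rintro rfl; simp at hn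
  simp only [tau12_sq_mul_of_squarefree ha hr, Nat.card_divisors hr,
    factorization_sq_mul_div_two ha hr]
  refine Finset.prod_subset (Nat.primeFactors_mono ⟨r * a, by ring⟩ hn) fun p _ hp => ?_
  rw [← Nat.support_factorization, Finsupp.notMem_support_iff] at hp
  rw [hp, zero_add]

theorem tau12_eq_prod {S : Finset Nat.Primes} (hn : n ≠ 0)
    (hS : ∀ p : Nat.Primes, (p : ℕ) ∣ n → p ∈ S) :
    tau12 n = ∏ p : S, (n.factorization p / 2 + 1) := by
  let coe : Nat.Primes ↪ ℕ := ⟨_, Nat.Primes.coe_nat_injective⟩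
  rw [tau12_eq_prod_primeFactors hn, Finset.prod_coe_sort S fun p => n.factorization p / 2 + 1]
  refine (Finset.prod_subset (fun p hp => ?_) fun p _ hp => ?_).trans (Finset.prod_map S coe _)
  · have hprime := Nat.prime_of_mem_primeFactors hp
    exact Finset.mem_map.2 ⟨⟨p, hprime⟩, hS _ (Nat.dvd_of_mem_primeFactors hp), rfl⟩
  · rw [← Nat.support_factorization, Finsupp.notMem_support_iff] at hp
    rw [hp, Nat.zero_div, zero_add]

end Multiplicativity

section CoprimePowers

variable {S : Finset Nat.Primes}

theorem pairwise_isRelPrime_prime_pow (e : S → ℕ) :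
    Pairwise (Function.onFun IsRelPrime fun p : S => (p : ℕ) ^ e p) := fun p q hpq =>
  Nat.coprime_iff_isRelPrime.1 <| Nat.Coprime.pow _ _ <| (Nat.coprime_primes p.1.2 q.1.2).2
    fun h => hpq (Subtype.ext (Subtype.ext h))

theorem prod_prime_pow_ne_zero (e : S → ℕ) : ∏ p : S, (p : ℕ) ^ e p ≠ 0 :=
  Finset.prod_ne_zero_iff.2 fun p _ => pow_ne_zero _ p.1.2.ne_zero

theorem factorization_prod_prime_pow (e : S → ℕ) (q : S) :
    (∏ p : S, (p : ℕ) ^ e p).factorization q = e q := by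
  rw [Nat.factorization_prod_apply fun p _ => pow_ne_zero _ p.1.2.ne_zero,
    Finset.sum_eq_single q, q.1.2.factorization_pow, Finsupp.single_eq_same]
  · intro p _ hpq
    rw [p.1.2.factorization_pow, Finsupp.single_apply, if_neg]
    exact fun h => hpq (Subtype.ext (Subtype.ext h))
  · simp

theorem prod_prime_pow_dvd_iff (e : S → ℕ) {m : ℕ} (hm : m ≠ 0) :
    ∏ p : S, (p : ℕ) ^ e p ∣ m ↔ ∀ p : S, e p ≤ m.factorization p := by
  simp only [← fun p : S => p.1.2.pow_dvd_iff_le_factorization (k := e p) hm]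
  exact ⟨fun h p => (Finset.dvd_prod_of_mem _ (Finset.mem_univ p)).trans h,
    Fintype.prod_dvd_of_isRelPrime (pairwise_isRelPrime_prime_pow e)⟩

end CoprimePowers

section LocalFactors

/-- `tau12Local v e` is `τ_{1,2}(p ^ (v - e))` for a prime `p`, read as `0` when `v < e`. -/
def tau12Local (v e : ℕ) : ℕ := if e ≤ v then (v - e) / 2 + 1 else 0

theorem tau12Local_zero (v : ℕ) : tau12Local v 0 = v / 2 + 1 := by simp [tau12Local]

theorem tau12Local_one (v : ℕ) : tau12Local v 1 = (v + 1) / 2 := by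
  unfold tau12Local; split_ifs <;> omega

theorem tau12Local_two (v : ℕ) : tau12Local v 2 = v / 2 := by
  unfold tau12Local; split_ifs <;> omega

/-- `tau12Quot m i` is `τ_{1,2}(m / i)`, read as `0` when `i` does not divide `m`. -/
noncomputable def tau12Quot (m i : ℕ) : ℕ := if i ∣ m then tau12 (m / i) else 0

theorem prod_tau12Local {S : Finset Nat.Primes} (e : S → ℕ) {m : ℕ} (hm : m ≠ 0)
    (hS : ∀ p : Nat.Primes, (p : ℕ) ∣ m → p ∈ S) :
    ∏ p : S, tau12Local (m.factorization p) (e p) = tau12Quot m (∏ p : S, (p : ℕ) ^ e p) := by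
  rw [tau12Quot]
  split_ifs with hdvd
  · have hquot : m / ∏ p : S, (p : ℕ) ^ e p ≠ 0 :=
      (Nat.div_ne_zero_iff_of_dvd hdvd).2 ⟨hm, prod_prime_pow_ne_zero e⟩
    rw [tau12_eq_prod hquot fun p hp => hS p (hp.trans (Nat.div_dvd_of_dvd hdvd))]
    refine Finset.prod_congr rfl fun p _ => ?_
    rw [tau12Local, if_pos ((prod_prime_pow_dvd_iff e hm).1 hdvd p), Nat.factorization_div hdvd,
      Finsupp.tsub_apply, factorization_prod_prime_pow]
  · rw [prod_prime_pow_dvd_iff e hm, not_forall] at hdvd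
    obtain ⟨p, hp⟩ := hdvd
    exact Finset.prod_eq_zero (Finset.mem_univ p) (if_neg hp)

/-- The exponent of `X` in the `c`-th monomial of `1 + XY - X²Y - XY²`. This polynomial is the
numerator in `∑ (⌊(a+b)/2⌋ + 1) XᵃYᵇ = (1 + XY - X²Y - XY²) / ((1-X)(1-X²)(1-Y)(1-Y²))`. -/
def numExpX : Fin 4 → ℕ := ![0, 1, 2, 1]

/-- The exponent of `Y` in the `c`-th monomial of `1 + XY - X²Y - XY²`; see `numExpX`. -/
def numExpY : Fin 4 → ℕ := ![0, 1, 1, 2]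

/-- The coefficient of the `c`-th monomial of `1 + XY - X²Y - XY²`; see `numExpX`. -/
def numCoeff : Fin 4 → ℝ := ![1, 1, -1, -1]

theorem abs_numCoeff (c : Fin 4) : |numCoeff c| = 1 := by
  fin_cases c <;> simp [numCoeff]

theorem add_div_two_add_one_eq_sum (a b : ℕ) :
    (((a + b) / 2 + 1 : ℕ) : ℝ) =
      ∑ c, numCoeff c * (tau12Local a (numExpX c) * tau12Local b (numExpY c)) := by
  simp only [Fin.sum_univ_four, numCoeff, numExpX, numExpY, Matrix.cons_val, tau12Local_zero,
    tau12Local_one, tau12Local_two]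
  have half_succ : ∀ v : ℕ, (v + 1) / 2 = v / 2 + v % 2 := by omega
  have half_add : (a + b) / 2 = a / 2 + b / 2 + a % 2 * (b % 2) := by
    obtain h | h := a.mod_two_eq_zero_or_one <;> rw [h] <;> omega
  rw [half_add, half_succ, half_succ]
  push_cast
  ring

theorem tau12_mul_eq_sum {S : Finset Nat.Primes} {m n : ℕ} (hm : m ≠ 0) (hn : n ≠ 0)
    (hmS : ∀ p : Nat.Primes, (p : ℕ) ∣ m → p ∈ S) (hnS : ∀ p : Nat.Primes, (p : ℕ) ∣ n → p ∈ S) :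
    (tau12 (m * n) : ℝ) = ∑ φ : S → Fin 4, (∏ p, numCoeff (φ p)) *
      (tau12Quot m (∏ p : S, (p : ℕ) ^ numExpX (φ p)) *
        tau12Quot n (∏ p : S, (p : ℕ) ^ numExpY (φ p))) := by
  have hmnS : ∀ p : Nat.Primes, (p : ℕ) ∣ m * n → p ∈ S := fun p hp =>
    (p.2.dvd_mul.1 hp).elim (hmS p) (hnS p)
  rw [tau12_eq_prod (mul_ne_zero hm hn) hmnS, Nat.cast_prod, Nat.factorization_mul hm hn]
  simp only [Finsupp.add_apply, add_div_two_add_one_eq_sum, Fintype.prod_sum,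
    Finset.prod_mul_distrib, ← Nat.cast_prod]
  simp only [prod_tau12Local _ hm hmS, prod_tau12Local _ hn hnS]

end LocalFactors

section DoubleSum

/-- The summatory function `y ↦ ∑_{n ≤ y} τ_{1,2}(n)`. -/
noncomputable def tau12Sum (y : ℝ) : ℝ := ∑ n ∈ Finset.Icc 1 ⌊y⌋₊, (tau12 n : ℝ)

theorem tau12Sum_of_lt_one {y : ℝ} (hy : y < 1) : tau12Sum y = 0 := by
  rw [tau12Sum, Nat.floor_eq_zero.2 hy, Finset.Icc_eq_empty (by norm_num), Finset.sum_empty]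

theorem sum_tau12Quot (x : ℝ) {i : ℕ} (hi : i ≠ 0) :
    ∑ m ∈ Finset.Icc 1 ⌊x⌋₊, (tau12Quot m i : ℝ) = tau12Sum (x / i) := by
  have hi' : 0 < i := Nat.pos_of_ne_zero hi
  simp only [tau12Quot, tau12Sum, Nat.cast_ite, Nat.cast_zero, ← Finset.sum_filter,
    Nat.floor_div_natCast]
  refine Finset.sum_nbij' (· / i) (· * i) ?_ ?_ ?_ ?_ fun _ _ => rfl
  · intro m hm
    obtain ⟨hm, hdvd⟩ := Finset.mem_filter.1 hm
    obtain ⟨hm1, hmx⟩ := Finset.mem_Icc.1 hm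
    exact Finset.mem_Icc.2 ⟨Nat.div_pos (Nat.le_of_dvd hm1 hdvd) hi', Nat.div_le_div_right hmx⟩
  · intro q hq
    obtain ⟨hq1, hqx⟩ := Finset.mem_Icc.1 hq
    exact Finset.mem_filter.2 ⟨Finset.mem_Icc.2 ⟨Nat.mul_pos hq1 hi',
      (Nat.le_div_iff_mul_le hi').1 hqx⟩, dvd_mul_left i q⟩
  · exact fun m hm => Nat.div_mul_cancel (Finset.mem_filter.1 hm).2
  · exact fun q _ => Nat.mul_div_cancel q hi'

theorem sum_sum_tau12_mul_eq {S : Finset Nat.Primes} {x : ℝ}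
    (hS : ∀ p : Nat.Primes, (p : ℕ) ≤ ⌊x⌋₊ → p ∈ S) :
    ∑ m ∈ Finset.Icc 1 ⌊x⌋₊, ∑ n ∈ Finset.Icc 1 ⌊x⌋₊, (tau12 (m * n) : ℝ) =
      ∑ φ : S → Fin 4, (∏ p, numCoeff (φ p)) *
        (tau12Sum (x / ∏ p : S, (p : ℝ) ^ numExpX (φ p)) *
          tau12Sum (x / ∏ p : S, (p : ℝ) ^ numExpY (φ p))) := by
  have hdvd : ∀ k ∈ Finset.Icc 1 ⌊x⌋₊, k ≠ 0 ∧ ∀ p : Nat.Primes, (p : ℕ) ∣ k → p ∈ S := by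
    intro k hk
    obtain ⟨hk1, hkx⟩ := Finset.mem_Icc.1 hk
    exact ⟨by omega, fun p hp => hS p ((Nat.le_of_dvd hk1 hp).trans hkx)⟩
  calc
    _ = ∑ m ∈ Finset.Icc 1 ⌊x⌋₊, ∑ n ∈ Finset.Icc 1 ⌊x⌋₊, ∑ φ : S → Fin 4,
        (∏ p, numCoeff (φ p)) * (tau12Quot m (∏ p : S, (p : ℕ) ^ numExpX (φ p)) *
          tau12Quot n (∏ p : S, (p : ℕ) ^ numExpY (φ p)) : ℝ) :=
      Finset.sum_congr rfl fun m hm => Finset.sum_congr rfl fun n hn =>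
        tau12_mul_eq_sum (hdvd m hm).1 (hdvd n hn).1 (hdvd m hm).2 (hdvd n hn).2
    _ = ∑ φ : S → Fin 4, (∏ p, numCoeff (φ p)) *
        ((∑ m ∈ Finset.Icc 1 ⌊x⌋₊, (tau12Quot m (∏ p : S, (p : ℕ) ^ numExpX (φ p)) : ℝ)) *
          ∑ n ∈ Finset.Icc 1 ⌊x⌋₊, (tau12Quot n (∏ p : S, (p : ℕ) ^ numExpY (φ p)) : ℝ)) := by
      simp only [Finset.sum_comm (t := (Finset.univ : Finset (S → Fin 4))), ← Finset.mul_sum,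
        ← Finset.sum_mul]
    _ = _ := by
      simp only [sum_tau12Quot x (prod_prime_pow_ne_zero _), Nat.cast_prod, Nat.cast_pow]

end DoubleSum

section SumIntegral

theorem exists_forall_sum_Icc_sub_sub_mem_Icc {f F : ℕ → ℝ} (hf : ∀ n ≥ 1, 0 ≤ f n)
    (hF : ∀ n ≥ 1, F (n + 1) - F n ∈ Set.Icc (f (n + 1)) (f n)) :
    ∃ L : ℝ, ∀ N ≥ 1, ∑ k ∈ Finset.Icc 1 N, f k - F N - L ∈ Set.Icc 0 (f N) := by
  let u : ℕ → ℝ := fun n => ∑ k ∈ Finset.Icc 1 (n + 1), f k - F (n + 1)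
  have hu : Antitone u := antitone_nat_of_succ_le fun n => by
    simp only [u, Finset.sum_Icc_succ_top (Nat.le_add_left 1 (n + 1))]
    linarith [(hF (n + 1) (by omega)).1]
  have hl : Monotone fun n => u n - f (n + 1) := monotone_nat_of_le_succ fun n => by
    simp only [u, Finset.sum_Icc_succ_top (Nat.le_add_left 1 (n + 1))]
    linarith [(hF (n + 1) (by omega)).2]
  have hlu : (fun n => u n - f (n + 1)) ≤ u := fun n => sub_le_self _ (hf _ (by omega))
  refine ⟨⨆ n, (u n - f (n + 1)), fun N hN => ?_⟩
  obtain ⟨n, rfl⟩ := Nat.exists_eq_add_of_le' hN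
  obtain ⟨hlow, hupp⟩ := Set.mem_iInter.1 (hl.ciSup_mem_iInter_Icc_of_antitone hu hlu) n
  exact ⟨sub_nonneg.2 hupp, sub_le_comm.1 hlow⟩

theorem exists_forall_sum_one_div_sq_mem_Icc : ∃ L : ℝ, ∀ N : ℕ, 1 ≤ N →
    ∑ k ∈ Finset.Icc 1 N, 1 / (k : ℝ) ^ 2 + 1 / N - L ∈ Set.Icc 0 (1 / (N : ℝ) ^ 2) := by
  obtain ⟨L, hL⟩ := exists_forall_sum_Icc_sub_sub_mem_Icc (f := fun k => 1 / (k : ℝ) ^ 2)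
    (F := fun k => -(1 / (k : ℝ))) (fun _ _ => by positivity) fun n hn => by
      have hn0 : (0 : ℝ) < n := by exact_mod_cast hn
      have hdiff : -(1 / ((n + 1 : ℕ) : ℝ)) - -(1 / (n : ℝ)) = 1 / (n * (n + 1)) := by
        push_cast
        field_simp
        ring
      rw [hdiff]
      push_cast
      constructor <;> gcongr <;> nlinarith
  exact ⟨L, fun N hN => by simpa only [sub_neg_eq_add] using hL N hN⟩

theorem exists_forall_sum_one_div_sqrt_mem_Icc : ∃ L : ℝ, ∀ N : ℕ, 1 ≤ N →
    ∑ k ∈ Finset.Icc 1 N, 1 / √(k : ℝ) - 2 * √N - L ∈ Set.Icc 0 (1 / √(N : ℝ)) := by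
  refine exists_forall_sum_Icc_sub_sub_mem_Icc (f := fun k => 1 / √(k : ℝ))
    (F := fun k => 2 * √k) (fun _ _ => by positivity) fun n hn => ?_
  have hr : 0 < √(n : ℝ) := Real.sqrt_pos.2 (by exact_mod_cast hn)
  have hq : 0 < √((n + 1 : ℕ) : ℝ) := Real.sqrt_pos.2 (by positivity)
  have hqr : √((n + 1 : ℕ) : ℝ) ^ 2 = √(n : ℝ) ^ 2 + 1 := by
    rw [Real.sq_sqrt (by positivity), Real.sq_sqrt (by positivity)]
    push_cast
    rfl
  constructor
  · rw [div_le_iff₀ hq]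
    nlinarith [sq_nonneg (√((n + 1 : ℕ) : ℝ) - √n)]
  · rw [le_div_iff₀ hr]
    nlinarith [sq_nonneg (√((n + 1 : ℕ) : ℝ) - √n)]

end SumIntegral

section Hyperbola

/-- The lattice points of the region `a b² ≤ y`, `a ≥ 1`, `b ≥ 1`. -/
noncomputable def tau12Region (y : ℝ) : Finset (ℕ × ℕ) :=
  {q ∈ Finset.Icc 1 ⌊y⌋₊ ×ˢ Finset.Icc 1 ⌊y⌋₊ | (q.1 : ℝ) * (q.2 : ℝ) ^ 2 ≤ y}

variable {y : ℝ} {Z : ℕ}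

theorem mem_tau12Region {q : ℕ × ℕ} :
    q ∈ tau12Region y ↔ 1 ≤ q.1 ∧ 1 ≤ q.2 ∧ (q.1 : ℝ) * (q.2 : ℝ) ^ 2 ≤ y := by
  obtain ⟨a, b⟩ := q
  simp only [tau12Region, Finset.mem_filter, Finset.mem_product, Finset.mem_Icc]
  refine ⟨fun ⟨⟨⟨ha, _⟩, hb, _⟩, h⟩ => ⟨ha, hb, h⟩, fun ⟨ha, hb, h⟩ => ?_⟩
  have hab : a * b ^ 2 ≤ ⌊y⌋₊ := Nat.le_floor (by exact_mod_cast h)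
  exact ⟨⟨⟨ha, (Nat.le_mul_of_pos_right a (by positivity)).trans hab⟩, hb,
    ((Nat.le_self_pow two_ne_zero b).trans (Nat.le_mul_of_pos_left _ ha)).trans hab⟩, h⟩

theorem tau12Sum_eq_card (y : ℝ) : tau12Sum y = (tau12Region y).card := by
  have hmaps : ∀ q ∈ tau12Region y, q.1 * q.2 ^ 2 ∈ Finset.Icc 1 ⌊y⌋₊ := fun q hq => by
    obtain ⟨ha, hb, h⟩ := mem_tau12Region.1 hq
    exact Finset.mem_Icc.2 ⟨Nat.mul_pos ha (pow_pos hb 2), Nat.le_floor (by exact_mod_cast h)⟩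
  rw [tau12Sum, Finset.card_eq_sum_card_fiberwise hmaps, Nat.cast_sum]
  refine Finset.sum_congr rfl fun n hn => ?_
  obtain ⟨hn1, hny⟩ := Finset.mem_Icc.1 hn
  rw [tau12_eq_card_filter (by omega) hny, tau12Region, Finset.filter_filter]
  congr 2
  refine Finset.filter_congr fun q _ => ⟨?_, And.right⟩
  rintro rfl
  exact ⟨by exact_mod_cast (Nat.le_floor_iff' (by omega)).1 hny, rfl⟩

theorem card_filter_snd_le_tau12Region (hy : 0 ≤ y) (Z : ℕ) :
    {q ∈ tau12Region y | q.2 ≤ Z}.card = ∑ b ∈ Finset.Icc 1 Z, ⌊y / (b : ℝ) ^ 2⌋₊ := by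
  rw [Finset.card_eq_sum_ones, Finset.sum_finset_product_right _ (Finset.Icc 1 Z)
    fun b => Finset.Icc 1 ⌊y / (b : ℝ) ^ 2⌋₊]
  · simp
  · rintro ⟨a, b⟩
    simp only [Finset.mem_filter, mem_tau12Region, Finset.mem_Icc]
    rw [Nat.le_floor_iff (by positivity)]
    refine ⟨fun ⟨⟨ha, hb, h⟩, hbZ⟩ => ⟨⟨hb, hbZ⟩, ha, (le_div_iff₀ (by positivity)).2 h⟩,
      fun ⟨⟨hb, hbZ⟩, ha, h⟩ => ⟨⟨ha, hb, (le_div_iff₀ (by positivity)).1 h⟩, hbZ⟩⟩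

theorem card_filter_fst_le_tau12Region (Z : ℕ) :
    {q ∈ tau12Region y | q.1 ≤ Z}.card = ∑ a ∈ Finset.Icc 1 Z, ⌊√(y / a)⌋₊ := by
  rw [Finset.card_eq_sum_ones, Finset.sum_finset_product _ (Finset.Icc 1 Z)
    fun a => Finset.Icc 1 ⌊√(y / a)⌋₊]
  · simp
  · rintro ⟨a, b⟩
    simp only [Finset.mem_filter, mem_tau12Region, Finset.mem_Icc]
    rw [Nat.le_floor_iff (Real.sqrt_nonneg _)]
    have le_sqrt_iff (ha : 1 ≤ a) (hb : 1 ≤ b) : (b : ℝ) ≤ √(y / a) ↔ (a : ℝ) * b ^ 2 ≤ y := by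
      rw [Real.le_sqrt' (by positivity), le_div_iff₀' (by positivity)]
    exact ⟨fun ⟨⟨ha, hb, h⟩, haZ⟩ => ⟨⟨ha, haZ⟩, hb, (le_sqrt_iff ha hb).2 h⟩,
      fun ⟨⟨ha, haZ⟩, hb, h⟩ => ⟨⟨ha, hb, (le_sqrt_iff ha hb).1 h⟩, haZ⟩⟩

theorem filter_union_filter_tau12Region (hy : y < ((Z : ℝ) + 1) ^ 3) :
    {q ∈ tau12Region y | q.2 ≤ Z} ∪ {q ∈ tau12Region y | q.1 ≤ Z} = tau12Region y := by
  rw [← Finset.filter_or, Finset.filter_eq_self]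
  rintro ⟨a, b⟩ hq
  by_contra! ⟨hb, ha⟩
  have ha' : (Z : ℝ) + 1 ≤ a := by exact_mod_cast ha
  have hb' : (Z : ℝ) + 1 ≤ b := by exact_mod_cast hb
  have : ((Z : ℝ) + 1) ^ 3 ≤ y := calc
    ((Z : ℝ) + 1) ^ 3 = (Z + 1) * (Z + 1) ^ 2 := by ring
    _ ≤ (a : ℝ) * (b : ℝ) ^ 2 := by gcongr
    _ ≤ y := (mem_tau12Region.1 hq).2.2
  exact hy.not_ge this

theorem filter_inter_filter_tau12Region (hy : (Z : ℝ) ^ 3 ≤ y) :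
    {q ∈ tau12Region y | q.2 ≤ Z} ∩ {q ∈ tau12Region y | q.1 ≤ Z} =
      Finset.Icc 1 Z ×ˢ Finset.Icc 1 Z := by
  rw [← Finset.filter_and]
  ext ⟨a, b⟩
  simp only [Finset.mem_filter, mem_tau12Region, Finset.mem_product, Finset.mem_Icc]
  refine ⟨fun ⟨⟨ha, hb, _⟩, hbZ, haZ⟩ => ⟨⟨ha, haZ⟩, hb, hbZ⟩,
    fun ⟨⟨ha, haZ⟩, hb, hbZ⟩ => ⟨⟨ha, hb, ?_⟩, hbZ, haZ⟩⟩
  calc (a : ℝ) * b ^ 2 ≤ Z * Z ^ 2 := by gcongr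
    _ = (Z : ℝ) ^ 3 := by ring
    _ ≤ y := hy

theorem tau12Sum_add_sq (hZy : (Z : ℝ) ^ 3 ≤ y) (hyZ : y < ((Z : ℝ) + 1) ^ 3) :
    tau12Sum y + Z ^ 2 = ∑ b ∈ Finset.Icc 1 Z, (⌊y / (b : ℝ) ^ 2⌋₊ : ℝ) +
      ∑ a ∈ Finset.Icc 1 Z, (⌊√(y / a)⌋₊ : ℝ) := by
  have hcard := Finset.card_union_add_card_inter {q ∈ tau12Region y | q.2 ≤ Z}
    {q ∈ tau12Region y | q.1 ≤ Z}
  rw [filter_union_filter_tau12Region hyZ, filter_inter_filter_tau12Region hZy,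
    Finset.card_product, Nat.card_Icc, Nat.add_sub_cancel, ← sq,
    card_filter_snd_le_tau12Region ((by positivity : (0 : ℝ) ≤ Z ^ 3).trans hZy),
    card_filter_fst_le_tau12Region] at hcard
  rw [tau12Sum_eq_card]
  exact_mod_cast hcard

theorem sum_floor_mem_Icc {ι : Type*} (s : Finset ι) {g : ι → ℝ} (hg : ∀ k ∈ s, 0 ≤ g k) :
    ∑ k ∈ s, (⌊g k⌋₊ : ℝ) ∈ Set.Icc (∑ k ∈ s, g k - s.card) (∑ k ∈ s, g k) := by
  constructor
  · rw [Finset.card_eq_sum_ones, Nat.cast_sum, ← Finset.sum_sub_distrib]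
    exact Finset.sum_le_sum fun k _ => by exact_mod_cast (Nat.sub_one_lt_floor (g k)).le
  · exact Finset.sum_le_sum fun k hk => Nat.floor_le (hg k hk)

end Hyperbola

section TwoTermExpansion

theorem sqrt_div_mem_Icc_of_cube_le {y Z : ℝ} (hZ : 1 ≤ Z) (hZy : Z ^ 3 ≤ y)
    (hyZ : y < (Z + 1) ^ 3) : √(y / Z) ∈ Set.Icc Z (Z + 2) := by
  have hZ0 : 0 < Z := by linarith
  constructor
  · exact Real.le_sqrt_of_sq_le ((le_div_iff₀ hZ0).2 (by linarith [hZy]))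
  · rw [Real.sqrt_le_left (by linarith), div_le_iff₀ hZ0]
    nlinarith

theorem sum_floor_div_sq_mem_Icc {y : ℝ} (hy : 0 ≤ y) (Z : ℕ) :
    ∑ b ∈ Finset.Icc 1 Z, (⌊y / (b : ℝ) ^ 2⌋₊ : ℝ) ∈
      Set.Icc (y * ∑ b ∈ Finset.Icc 1 Z, 1 / (b : ℝ) ^ 2 - Z)
        (y * ∑ b ∈ Finset.Icc 1 Z, 1 / (b : ℝ) ^ 2) := by
  have := sum_floor_mem_Icc (Finset.Icc 1 Z) (g := fun b : ℕ => y / (b : ℝ) ^ 2)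
    fun _ _ => by positivity
  simpa only [Finset.mul_sum, mul_one_div, Nat.card_Icc, Nat.add_sub_cancel] using this

theorem sum_floor_sqrt_div_mem_Icc {y : ℝ} (hy : 0 ≤ y) (Z : ℕ) :
    ∑ a ∈ Finset.Icc 1 Z, (⌊√(y / a)⌋₊ : ℝ) ∈
      Set.Icc (√y * ∑ a ∈ Finset.Icc 1 Z, 1 / √(a : ℝ) - Z)
        (√y * ∑ a ∈ Finset.Icc 1 Z, 1 / √(a : ℝ)) := by
  have := sum_floor_mem_Icc (Finset.Icc 1 Z) (g := fun a : ℕ => √(y / a))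
    fun _ _ => Real.sqrt_nonneg _
  simpa only [Real.sqrt_div hy, Finset.mul_sum, mul_one_div, Nat.card_Icc, Nat.add_sub_cancel]
    using this

theorem sqrt_div_sub_sq_eq {y Z : ℝ} (hy : 0 ≤ y) (hZ : 0 < Z) :
    (√(y / Z) - Z) ^ 2 = y * (1 / Z) - √y * (2 * √Z) + Z ^ 2 := by
  have hsqrt : √y = √(y / Z) * √Z := by
    rw [← Real.sqrt_mul (by positivity), div_mul_cancel₀ _ hZ.ne']
  calc (√(y / Z) - Z) ^ 2 = √(y / Z) ^ 2 - √(y / Z) * (2 * Z) + Z ^ 2 := by ring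
    _ = y / Z - √(y / Z) * (2 * (√Z * √Z)) + Z ^ 2 := by
      rw [Real.sq_sqrt (by positivity), Real.mul_self_sqrt hZ.le]
    _ = y * (1 / Z) - √y * (2 * √Z) + Z ^ 2 := by rw [hsqrt]; ring

theorem tau12Sum_sub_mem_Icc_of_cube_le (A B : ℝ) {y : ℝ} {Z : ℕ} (hZ : 1 ≤ Z)
    (hZy : (Z : ℝ) ^ 3 ≤ y) (hyZ : y < ((Z : ℝ) + 1) ^ 3) :
    tau12Sum y - A * y - B * √y
        - y * (∑ b ∈ Finset.Icc 1 Z, 1 / (b : ℝ) ^ 2 + 1 / Z - A)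
        - √y * (∑ a ∈ Finset.Icc 1 Z, 1 / √(a : ℝ) - 2 * √Z - B)
        + (√(y / Z) - Z) ^ 2 ∈ Set.Icc (-(2 * Z) : ℝ) 0 := by
  have hy : 0 ≤ y := (by positivity : (0 : ℝ) ≤ Z ^ 3).trans hZy
  have hsum := tau12Sum_add_sq hZy hyZ
  obtain ⟨hF₁, hF₁'⟩ := sum_floor_div_sq_mem_Icc hy Z
  obtain ⟨hF₂, hF₂'⟩ := sum_floor_sqrt_div_mem_Icc hy Z
  rw [sqrt_div_sub_sq_eq hy (by exact_mod_cast hZ)]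
  constructor <;> linarith

theorem abs_tau12Sum_sub_le_of_cube_le {A B y : ℝ} {Z : ℕ}
    (hA : ∑ b ∈ Finset.Icc 1 Z, 1 / (b : ℝ) ^ 2 + 1 / Z - A ∈ Set.Icc 0 (1 / (Z : ℝ) ^ 2))
    (hB : ∑ a ∈ Finset.Icc 1 Z, 1 / √(a : ℝ) - 2 * √Z - B ∈ Set.Icc 0 (1 / √(Z : ℝ)))
    (hZ : 1 ≤ Z) (hZy : (Z : ℝ) ^ 3 ≤ y) (hyZ : y < ((Z : ℝ) + 1) ^ 3) :
    |tau12Sum y - A * y - B * √y| ≤ 12 * Z := by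
  have hZ1 : (1 : ℝ) ≤ Z := by exact_mod_cast hZ
  have hy : 0 ≤ y := (by positivity : (0 : ℝ) ≤ Z ^ 3).trans hZy
  obtain ⟨hmain, hmain'⟩ := tau12Sum_sub_mem_Icc_of_cube_le A B hZ hZy hyZ
  obtain ⟨hZt, htZ⟩ := sqrt_div_mem_Icc_of_cube_le hZ1 hZy hyZ
  have htsq : y / Z = √(y / Z) ^ 2 := (Real.sq_sqrt (by positivity)).symm
  have hsqrt : √y / √Z = √(y / Z) := (Real.sqrt_div hy _).symm
  set t := √(y / Z)
  set E₁ := ∑ b ∈ Finset.Icc 1 Z, 1 / (b : ℝ) ^ 2 + 1 / Z - A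
  set E₂ := ∑ a ∈ Finset.Icc 1 Z, 1 / √(a : ℝ) - 2 * √Z - B
  have hE₁_nonneg : 0 ≤ y * E₁ := mul_nonneg hy hA.1
  have hE₂_nonneg : 0 ≤ √y * E₂ := mul_nonneg (Real.sqrt_nonneg y) hB.1
  have hE₁ : y * E₁ ≤ 9 * Z := calc
    y * E₁ ≤ y * (1 / (Z : ℝ) ^ 2) := by gcongr; exact hA.2
    _ = t ^ 2 / Z := by rw [← htsq]; field_simp
    _ ≤ (3 * Z) ^ 2 / Z := by gcongr; linarith
    _ = 9 * Z := by field_simp; norm_num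
  have hE₂ : √y * E₂ ≤ 3 * Z := calc
    √y * E₂ ≤ √y * (1 / √Z) := by gcongr; exact hB.2
    _ = t := by rw [mul_one_div, hsqrt]
    _ ≤ 3 * Z := by linarith
  have ht_nonneg : 0 ≤ (t - Z) ^ 2 := sq_nonneg _
  have ht : (t - Z) ^ 2 ≤ 4 * Z := by nlinarith
  rw [abs_le]
  constructor <;> linarith

theorem exists_forall_abs_tau12Sum_sub_le : ∃ A B K : ℝ, ∀ y : ℝ, 0 < y →
    |tau12Sum y - A * y - B * y ^ (1 / 2 : ℝ)| ≤ K * y ^ (1 / 3 : ℝ) := by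
  obtain ⟨A, hA⟩ := exists_forall_sum_one_div_sq_mem_Icc
  obtain ⟨B, hB⟩ := exists_forall_sum_one_div_sqrt_mem_Icc
  refine ⟨A, B, |A| + |B| + 12, fun y hy => ?_⟩
  rw [← Real.sqrt_eq_rpow]
  set w := y ^ (1 / 3 : ℝ) with hw
  have hw0 : 0 < w := by positivity
  obtain hy1 | hy1 := lt_or_ge y 1
  · have hyw : y ≤ w := by
      simpa only [Real.rpow_one] using
        Real.rpow_le_rpow_of_exponent_ge hy hy1.le (by norm_num : (1 / 3 : ℝ) ≤ 1)
    have hsw : √y ≤ w := by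
      rw [Real.sqrt_eq_rpow]
      exact Real.rpow_le_rpow_of_exponent_ge hy hy1.le (by norm_num)
    calc |tau12Sum y - A * y - B * √y| = |A * y + B * √y| := by
          rw [tau12Sum_of_lt_one hy1, ← abs_neg]; ring_nf
      _ ≤ |A| * y + |B| * √y := by
          simpa only [abs_mul, abs_of_pos hy, abs_of_nonneg (Real.sqrt_nonneg y)] using
            abs_add_le (A * y) (B * √y)
      _ ≤ |A| * w + |B| * w := by gcongr
      _ ≤ (|A| + |B| + 12) * w := by linarith
  · have hw3 : w ^ 3 = y := by
      rw [hw, ← Real.rpow_natCast, ← Real.rpow_mul hy.le]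
      norm_num
    have hZ : 1 ≤ ⌊w⌋₊ := Nat.le_floor (by
      rw [Nat.cast_one]; exact Real.one_le_rpow hy1 (by norm_num))
    have hZw : (⌊w⌋₊ : ℝ) ≤ w := Nat.floor_le hw0.le
    calc |tau12Sum y - A * y - B * √y| ≤ 12 * ⌊w⌋₊ :=
          abs_tau12Sum_sub_le_of_cube_le (hA _ hZ) (hB _ hZ) hZ
            (by rw [← hw3]; gcongr) (by rw [← hw3]; gcongr; exact Nat.lt_floor_add_one w)
      _ ≤ 12 * w := by gcongr
      _ ≤ (|A| + |B| + 12) * w := by gcongr; linarith [abs_nonneg A, abs_nonneg B]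

end TwoTermExpansion

section WeightedDilates

variable {f : ℝ → ℝ} {A B K β γ δ : ℝ}

theorem abs_sub_mul_le_of_abs_sub_sub_le (hf₀ : ∀ y < 1, f y = 0)
    (hf : ∀ y, 0 < y → |f y - A * y - B * y ^ β| ≤ K * y ^ γ) (hβδ : β ≤ δ) (hγδ : γ ≤ δ)
    (hδ : δ ≤ 1) {y : ℝ} (hy : 0 < y) : |f y - A * y| ≤ (|A| + |B| + K) * y ^ δ := by
  have hK : 0 ≤ K := by
    simpa only [Real.one_rpow, mul_one] using (abs_nonneg _).trans (hf 1 one_pos)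
  have hyδ : 0 < y ^ δ := by positivity
  obtain hy1 | hy1 := lt_or_ge y 1
  · calc |f y - A * y| = |A| * y := by
          rw [hf₀ y hy1, zero_sub, abs_neg, abs_mul, abs_of_pos hy]
      _ ≤ |A| * y ^ δ := by
          gcongr
          simpa only [Real.rpow_one] using Real.rpow_le_rpow_of_exponent_ge hy hy1.le hδ
      _ ≤ (|A| + |B| + K) * y ^ δ := by gcongr; linarith [abs_nonneg B]
  · calc |f y - A * y| = |(f y - A * y - B * y ^ β) + B * y ^ β| := by rw [sub_add_cancel]
      _ ≤ |f y - A * y - B * y ^ β| + |B * y ^ β| := abs_add_le _ _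
      _ ≤ K * y ^ γ + |B| * y ^ β := by
          rw [abs_mul B, abs_of_nonneg (by positivity : 0 ≤ y ^ β)]
          gcongr
          exact hf y hy
      _ ≤ K * y ^ δ + |B| * y ^ δ := by gcongr
      _ ≤ (|A| + |B| + K) * y ^ δ := by linarith [mul_nonneg (abs_nonneg A) hyδ.le]

theorem abs_mul_sub_sub_le (hf₀ : ∀ y < 1, f y = 0)
    (hf : ∀ y, 0 < y → |f y - A * y - B * y ^ β| ≤ K * y ^ γ) (hβδ : β ≤ δ) (hγδ : γ ≤ δ)
    (hδ : δ ≤ 1) {y z : ℝ} (hy : 0 < y) (hz : 0 < z) :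
    |f y * f z - A ^ 2 * (y * z) - A * B * (y * z ^ β + y ^ β * z)| ≤
      (|A| + |B| + K) ^ 2 * (y * z ^ γ + y ^ γ * z + y ^ δ * z ^ δ) := by
  have hK : 0 ≤ K := by
    simpa only [Real.one_rpow, mul_one] using (abs_nonneg _).trans (hf 1 one_pos)
  have hdecomp : f y * f z - A ^ 2 * (y * z) - A * B * (y * z ^ β + y ^ β * z) =
      A * y * (f z - A * z - B * z ^ β) + A * z * (f y - A * y - B * y ^ β)
        + (f y - A * y) * (f z - A * z) := by ring
  have hfδ {t : ℝ} (ht : 0 < t) := abs_sub_mul_le_of_abs_sub_sub_le hf₀ hf hβδ hγδ hδ ht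
  set M := |A| + |B| + K
  have hAK : |A| * K ≤ M ^ 2 := by
    rw [sq]
    gcongr <;> linarith [abs_nonneg A, abs_nonneg B]
  calc
    _ ≤ |A * y * (f z - A * z - B * z ^ β)| + |A * z * (f y - A * y - B * y ^ β)|
        + |(f y - A * y) * (f z - A * z)| := hdecomp ▸ abs_add_three _ _ _
    _ ≤ |A| * y * (K * z ^ γ) + |A| * z * (K * y ^ γ) + M * y ^ δ * (M * z ^ δ) := by
      simp only [abs_mul, abs_of_pos hy, abs_of_pos hz]
      gcongr
      exacts [hf z hz, hf y hy, hfδ hy, hfδ hz]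
    _ = |A| * K * (y * z ^ γ + y ^ γ * z) + M ^ 2 * (y ^ δ * z ^ δ) := by ring
    _ ≤ M ^ 2 * (y * z ^ γ + y ^ γ * z) + M ^ 2 * (y ^ δ * z ^ δ) := by gcongr
    _ = M ^ 2 * (y * z ^ γ + y ^ γ * z + y ^ δ * z ^ δ) := by ring

/-- The finite two-variable Dirichlet series `∑ₖ wₖ uₖ^(-σ) vₖ^(-τ)`, at real `σ`, `τ`. -/
noncomputable def dirichletPoly {ι : Type*} [Fintype ι] (w u v : ι → ℝ) (σ τ : ℝ) : ℝ :=
  ∑ k, w k * (u k ^ (-σ) * v k ^ (-τ))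

theorem abs_mul_div_sub_sub_le (hf₀ : ∀ y < 1, f y = 0)
    (hf : ∀ y, 0 < y → |f y - A * y - B * y ^ β| ≤ K * y ^ γ) (hβδ : β ≤ δ) (hγδ : γ ≤ δ)
    (hδ : δ ≤ 1) (hδγ : δ + δ = 1 + γ) {x u v : ℝ} (hx : 0 < x) (hu : 0 < u) (hv : 0 < v) :
    |f (x / u) * f (x / v) - A ^ 2 * (u ^ (-1 : ℝ) * v ^ (-1 : ℝ)) * x ^ 2
        - A * B * (u ^ (-1 : ℝ) * v ^ (-β) + u ^ (-β) * v ^ (-1 : ℝ)) * x ^ (1 + β)| ≤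
      (|A| + |B| + K) ^ 2 * (u ^ (-1 : ℝ) * v ^ (-γ) + u ^ (-γ) * v ^ (-1 : ℝ)
        + u ^ (-δ) * v ^ (-δ)) * x ^ (1 + γ) := by
  have hdiv (t : ℝ) : x / t = x * t ^ (-1 : ℝ) := by
    rw [Real.rpow_neg_one, div_eq_mul_inv]
  have hdiv_rpow {t : ℝ} (ht : 0 < t) (a : ℝ) : (x / t) ^ a = x ^ a * t ^ (-a) := by
    rw [Real.div_rpow hx.le ht.le, Real.rpow_neg ht.le, div_eq_mul_inv]
  have hxδ : x ^ δ * x ^ δ = x * x ^ γ := by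
    rw [← Real.rpow_add hx, hδγ, Real.rpow_add hx, Real.rpow_one]
  convert abs_mul_sub_sub_le hf₀ hf hβδ hγδ hδ (div_pos hx hu) (div_pos hx hv) using 1
  · congr 1
    rw [hdiv_rpow hu, hdiv_rpow hv, hdiv u, hdiv v, Real.rpow_add hx, Real.rpow_one]
    ring
  · simp only [hdiv_rpow hu, hdiv_rpow hv]
    rw [hdiv u, hdiv v, Real.rpow_add hx, Real.rpow_one]
    linear_combination -((|A| + |B| + K) ^ 2 * u ^ (-δ) * v ^ (-δ)) * hxδ

theorem abs_sum_mul_div_sub_sub_le (hf₀ : ∀ y < 1, f y = 0)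
    (hf : ∀ y, 0 < y → |f y - A * y - B * y ^ β| ≤ K * y ^ γ) (hβδ : β ≤ δ) (hγδ : γ ≤ δ)
    (hδ : δ ≤ 1) (hδγ : δ + δ = 1 + γ) {ι : Type*} [Fintype ι] (w : ι → ℝ) {u v : ι → ℝ}
    (hu : ∀ k, 0 < u k) (hv : ∀ k, 0 < v k) {x : ℝ} (hx : 0 < x) :
    |∑ k, w k * (f (x / u k) * f (x / v k)) - A ^ 2 * dirichletPoly w u v 1 1 * x ^ 2
        - A * B * (dirichletPoly w u v 1 β + dirichletPoly w u v β 1) * x ^ (1 + β)| ≤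
      (|A| + |B| + K) ^ 2 * (dirichletPoly |w| u v 1 γ + dirichletPoly |w| u v γ 1
        + dirichletPoly |w| u v δ δ) * x ^ (1 + γ) := by
  simp only [dirichletPoly, ← Finset.sum_add_distrib, Finset.mul_sum, Finset.sum_mul,
    ← Finset.sum_sub_distrib]
  refine (Finset.abs_sum_le_sum_abs _ _).trans (Finset.sum_le_sum fun k _ => ?_)
  convert mul_le_mul_of_nonneg_left
    (abs_mul_div_sub_sub_le hf₀ hf hβδ hγδ hδ hδγ hx (hu k) (hv k)) (abs_nonneg (w k)) using 1
  · rw [← abs_mul]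
    ring_nf
  · rw [Pi.abs_apply]
    ring

end WeightedDilates

section EulerProduct

theorem dirichletPoly_pi {ι κ : Type*} [Fintype ι] [DecidableEq ι] [Fintype κ] (w : ι → κ → ℝ)
    {u v : ι → κ → ℝ} (hu : ∀ i c, 0 ≤ u i c) (hv : ∀ i c, 0 ≤ v i c) (σ τ : ℝ) :
    dirichletPoly (fun φ : ι → κ => ∏ i, w i (φ i)) (fun φ => ∏ i, u i (φ i))
      (fun φ => ∏ i, v i (φ i)) σ τ = ∏ i, dirichletPoly (w i) (u i) (v i) σ τ := by
  simp only [dirichletPoly, Fintype.prod_sum, Finset.prod_mul_distrib]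
  simp only [Real.finsetProd_rpow, hu, hv, implies_true]

/-- The factor at `p` of the Euler product: `∑ s c * p ^ (-σ a - τ b)` over the monomials
`X ^ a Y ^ b` of `1 + XY - X²Y - XY²`. The coefficients `s` are either `numCoeff` or, for bounding
error terms, their absolute values. -/
noncomputable def eulerFactor (s : Fin 4 → ℝ) (σ τ p : ℝ) : ℝ :=
  dirichletPoly s (fun c => p ^ numExpX c) (fun c => p ^ numExpY c) σ τ

theorem dirichletPoly_prod_primes (s : Fin 4 → ℝ) (S : Finset Nat.Primes) (σ τ : ℝ) :
    dirichletPoly (fun φ : S → Fin 4 => ∏ p, s (φ p)) (fun φ => ∏ p : S, (p : ℝ) ^ numExpX (φ p))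
      (fun φ => ∏ p : S, (p : ℝ) ^ numExpY (φ p)) σ τ = ∏ p ∈ S, eulerFactor s σ τ p :=
  (dirichletPoly_pi (fun (_ : S) => s) (u := fun p c => (p : ℝ) ^ numExpX c)
    (v := fun p c => (p : ℝ) ^ numExpY c) (fun _ _ => by positivity) (fun _ _ => by positivity)
    σ τ).trans (Finset.prod_coe_sort S fun p : Nat.Primes => eulerFactor s σ τ p)

variable {s : Fin 4 → ℝ} {σ τ : ℝ}

theorem pow_rpow_neg_mul_pow_rpow_neg_le (hσ : 0 ≤ σ) (hτ : 0 ≤ τ) {p : ℝ} (hp : 1 ≤ p) {a b : ℕ}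
    (ha : a ≠ 0) (hb : b ≠ 0) : (p ^ a) ^ (-σ) * (p ^ b) ^ (-τ) ≤ p ^ (-(σ + τ)) := by
  have hp0 : 0 < p := by linarith
  rw [neg_add, Real.rpow_add hp0]
  gcongr ?_ * ?_
  · exact Real.rpow_le_rpow_of_nonpos hp0 (le_self_pow₀ hp ha) (neg_nonpos.2 hσ)
  · exact Real.rpow_le_rpow_of_nonpos hp0 (le_self_pow₀ hp hb) (neg_nonpos.2 hτ)

theorem abs_eulerFactor_sub_one_le (hs₀ : s 0 = 1) (hs : ∀ c, |s c| ≤ 1) (hσ : 0 ≤ σ)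
    (hτ : 0 ≤ τ) {p : ℝ} (hp : 1 ≤ p) : |eulerFactor s σ τ p - 1| ≤ 3 * p ^ (-(σ + τ)) := by
  have hexp : ∀ c : Fin 3, numExpX c.succ ≠ 0 ∧ numExpY c.succ ≠ 0 := by decide
  have hfactor : eulerFactor s σ τ p - 1 =
      ∑ c : Fin 3, s c.succ * ((p ^ numExpX c.succ) ^ (-σ) * (p ^ numExpY c.succ) ^ (-τ)) := by
    rw [eulerFactor, dirichletPoly, Fin.sum_univ_succ, hs₀]
    simp [numExpX, numExpY]
  calc
    _ ≤ ∑ c : Fin 3,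
        |s c.succ * ((p ^ numExpX c.succ) ^ (-σ) * (p ^ numExpY c.succ) ^ (-τ))| :=
      hfactor ▸ Finset.abs_sum_le_sum_abs _ _
    _ ≤ ∑ _c : Fin 3, p ^ (-(σ + τ)) := Finset.sum_le_sum fun c _ => by
      rw [abs_mul, abs_of_nonneg (a := _ * _) (by positivity)]
      exact (mul_le_of_le_one_left (by positivity) (hs _)).trans
        (pow_rpow_neg_mul_pow_rpow_neg_le hσ hτ hp (hexp c).1 (hexp c).2)
    _ = 3 * p ^ (-(σ + τ)) := by simp

/-- The Euler product over all primes of `eulerFactor s σ τ`; it has the junk value `1` where the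
product fails to converge. -/
noncomputable def eulerProduct (s : Fin 4 → ℝ) (σ τ : ℝ) : ℝ :=
  ∏' p : Nat.Primes, eulerFactor s σ τ p

theorem hasProd_eulerProduct (hs₀ : s 0 = 1) (hs : ∀ c, |s c| ≤ 1) (hσ : 0 ≤ σ)
    (hτ : 0 ≤ τ) (hστ : 1 < σ + τ) :
    HasProd (fun p : Nat.Primes => eulerFactor s σ τ p) (eulerProduct s σ τ) := by
  have hsum : Summable fun p : Nat.Primes => eulerFactor s σ τ p - 1 :=
    Summable.of_norm_bounded ((Nat.Primes.summable_rpow.2 (neg_lt_neg hστ)).mul_left 3)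
      fun p => abs_eulerFactor_sub_one_le hs₀ hs hσ hτ (by exact_mod_cast p.2.one_le)
  have hmul : Multipliable fun p : Nat.Primes => eulerFactor s σ τ p := by
    simpa only [add_sub_cancel] using Real.multipliable_one_add_of_summable hsum
  exact hmul.hasProd

end EulerProduct

section Asymptotics

theorem abs_sum_sum_tau12_mul_sub_sub_le {A B K : ℝ}
    (hK : ∀ y, 0 < y → |tau12Sum y - A * y - B * y ^ (1 / 2 : ℝ)| ≤ K * y ^ (1 / 3 : ℝ))
    {S : Finset Nat.Primes} {x : ℝ} (hx : 0 < x)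
    (hS : ∀ p : Nat.Primes, (p : ℕ) ≤ ⌊x⌋₊ → p ∈ S) :
    |(∑ m ∈ Finset.Icc 1 ⌊x⌋₊, ∑ n ∈ Finset.Icc 1 ⌊x⌋₊, (tau12 (m * n) : ℝ)) -
        A ^ 2 * (∏ p ∈ S, eulerFactor numCoeff 1 1 p) * x ^ 2 -
        A * B * (∏ p ∈ S, eulerFactor numCoeff 1 (1 / 2) p +
          ∏ p ∈ S, eulerFactor numCoeff (1 / 2) 1 p) * x ^ ((3 : ℝ) / 2)| ≤
      (|A| + |B| + K) ^ 2 * (∏ p ∈ S, eulerFactor |numCoeff| 1 (1 / 3) p +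
        ∏ p ∈ S, eulerFactor |numCoeff| (1 / 3) 1 p +
        ∏ p ∈ S, eulerFactor |numCoeff| (2 / 3) (2 / 3) p) * x ^ ((4 : ℝ) / 3) := by
  have hpos (e : Fin 4 → ℕ) (φ : S → Fin 4) : 0 < ∏ p : S, (p : ℝ) ^ e (φ p) :=
    Finset.prod_pos fun p _ => pow_pos (Nat.cast_pos.2 p.1.2.pos) _
  have habs : |fun φ : S → Fin 4 => ∏ p, numCoeff (φ p)| = fun φ => ∏ p, |numCoeff| (φ p) :=
    funext fun φ => Finset.abs_prod _ _
  have hbound := abs_sum_mul_div_sub_sub_le (δ := 2 / 3) (fun _ => tau12Sum_of_lt_one) hK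
    (by norm_num) (by norm_num) (by norm_num) (by norm_num)
    (fun φ : S → Fin 4 => ∏ p, numCoeff (φ p)) (hpos numExpX) (hpos numExpY) hx
  simp only [habs, dirichletPoly_prod_primes, ← sum_sum_tau12_mul_eq hS] at hbound
  rwa [show (1 : ℝ) + 1 / 2 = 3 / 2 by norm_num, show (1 : ℝ) + 1 / 3 = 4 / 3 by norm_num]
    at hbound

theorem isBigO_rpow_atTop_of_le {a b : ℝ} (hab : a ≤ b) :
    (fun x : ℝ => x ^ a) =O[atTop] fun x => x ^ b := by
  refine IsBigO.of_bound' ?_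
  filter_upwards [eventually_ge_atTop 1] with x hx
  have hx₀ : 0 ≤ x := zero_le_one.trans hx
  rw [Real.norm_of_nonneg (Real.rpow_nonneg hx₀ a), Real.norm_of_nonneg (Real.rpow_nonneg hx₀ b)]
  exact Real.rpow_le_rpow_of_exponent_le hx hab

theorem sum_tau12_mul_asymptotic_of_RH_general :
    ∃ C₁ C₂ : ℝ,
      (fun x : ℝ =>
          (∑ m ∈ Finset.Icc 1 ⌊x⌋₊, ∑ n ∈ Finset.Icc 1 ⌊x⌋₊, (tau12 (m * n) : ℝ)) -
            C₁ * x ^ 2 - C₂ * x ^ ((3 : ℝ) / 2)) =O[atTop]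
        fun x : ℝ => x ^ ((4 : ℝ) / 3) := by
  obtain ⟨A, B, K, hK⟩ := exists_forall_abs_tau12Sum_sub_le
  have hnum {σ τ : ℝ} (hσ : 0 ≤ σ) (hτ : 0 ≤ τ) (hστ : 1 < σ + τ) :=
    hasProd_eulerProduct (s := numCoeff) rfl (fun c => (abs_numCoeff c).le) hσ hτ hστ
  have habs {σ τ : ℝ} (hσ : 0 ≤ σ) (hτ : 0 ≤ τ) (hστ : 1 < σ + τ) :=
    hasProd_eulerProduct (s := |numCoeff|) (abs_numCoeff 0)
      (fun c => by rw [Pi.abs_apply, abs_abs, abs_numCoeff]) hσ hτ hστ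
  have hlead := hnum (σ := 1) (τ := 1) (by norm_num) (by norm_num) (by norm_num)
  have hsecond := (hnum (σ := 1) (τ := 1 / 2) (by norm_num) (by norm_num) (by norm_num)).add
    (hnum (σ := 1 / 2) (τ := 1) (by norm_num) (by norm_num) (by norm_num))
  have herror := ((habs (σ := 1) (τ := 1 / 3) (by norm_num) (by norm_num) (by norm_num)).add
    (habs (σ := 1 / 3) (τ := 1) (by norm_num) (by norm_num) (by norm_num))).add
      (habs (σ := 2 / 3) (τ := 2 / 3) (by norm_num) (by norm_num) (by norm_num))
  refine ⟨A ^ 2 * eulerProduct numCoeff 1 1,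
    A * B * (eulerProduct numCoeff 1 (1 / 2) + eulerProduct numCoeff (1 / 2) 1),
    IsBigO.of_bound ((|A| + |B| + K) ^ 2 * (eulerProduct |numCoeff| 1 (1 / 3) +
      eulerProduct |numCoeff| (1 / 3) 1 + eulerProduct |numCoeff| (2 / 3) (2 / 3))) ?_⟩
  filter_upwards [eventually_gt_atTop 0] with x hx
  rw [Real.norm_of_nonneg (Real.rpow_nonneg hx.le _)]
  refine le_of_tendsto_of_tendsto
    (((hlead.const_mul (A ^ 2)).mul_const (x ^ 2)).const_sub _ |>.sub
      ((hsecond.const_mul (A * B)).mul_const (x ^ ((3 : ℝ) / 2)))).norm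
    ((herror.const_mul ((|A| + |B| + K) ^ 2)).mul_const (x ^ ((4 : ℝ) / 3))) ?_
  filter_upwards [eventually_ge_atTop ((Finset.Icc 1 ⌊x⌋₊).subtype Nat.Prime)] with S hS
  exact abs_sum_sum_tau12_mul_sub_sub_le hK hx fun p hp =>
    hS (Finset.mem_subtype.2 (Finset.mem_Icc.2 ⟨p.2.one_le, hp⟩))

end Asymptotics

/-- Under the Riemann hypothesis,
`∑_{m,n ≤ x} τ_{1,2}(mn) = C₁ x² + C₂ x^{3/2} + O(x^{7/5+ε})`. -/
theorem sum_tau12_mul_asymptotic_of_RH (hRH : RiemannHypothesis) :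
    ∃ C₁ C₂ : ℝ, ∀ ε > (0 : ℝ),
      (fun x : ℝ =>
          (∑ m ∈ Finset.Icc 1 ⌊x⌋₊, ∑ n ∈ Finset.Icc 1 ⌊x⌋₊, (tau12 (m * n) : ℝ)) -
            C₁ * x ^ 2 - C₂ * x ^ ((3 : ℝ) / 2)) =O[atTop]
        fun x : ℝ => x ^ (7 / 5 + ε) := by
  obtain ⟨C₁, C₂, h⟩ := sum_tau12_mul_asymptotic_of_RH_general
  exact ⟨C₁, C₂, fun ε hε => h.trans (isBigO_rpow_atTop_of_le (by linarith))⟩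
end

section
/- For all positive integers m and n, τ(m·n) = Σ_{d | gcd(m,n)} τ(m/d) · τ(n/d) · μ(d) (the Busche–Ramanujan identity). -/
/-!
Every divisor `e` of `m * n` has exactly one factorisation `e = x * y` with `x ∣ m`, `y ∣ n` and
`x` coprime to `n / y`, namely the one with `y = gcd e n`. Summing over all pairs `(x, y)` and
detecting the coprimality by `∑ d ∣ gcd x (n / y), μ d`, one may sum over `d` first: the remaining
conditions `d ∣ x ∣ m` and `d * y ∣ n` say that `x = d * a` with `a ∣ m / d`, and `y ∣ n / d`.
-/

open Finset ArithmeticFunction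
open scoped ArithmeticFunction.Moebius ArithmeticFunction.zeta

theorem dvd_and_dvd_div_iff_mul_dvd {y d n : ℕ} : y ∣ n ∧ d ∣ n / y ↔ y * d ∣ n :=
  ⟨fun ⟨hy, hd⟩ ↦ Nat.mul_dvd_of_dvd_div hy hd,
    fun h ↦ ⟨dvd_of_mul_right_dvd h, Nat.dvd_div_of_mul_dvd h⟩⟩

theorem gcd_mul_eq_right_iff_coprime_div {x y n : ℕ} (hy : y ≠ 0) (hyn : y ∣ n) :
    (x * y).gcd n = y ↔ x.Coprime (n / y) := by
  obtain ⟨k, rfl⟩ := hyn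
  rw [Nat.mul_div_cancel_left k (Nat.pos_of_ne_zero hy), mul_comm x, Nat.gcd_mul_left,
    Nat.mul_eq_left hy, Nat.coprime_iff_gcd_eq_one]

theorem sum_divisors_moebius (n : ℕ) : ∑ d ∈ n.divisors, μ d = if n = 1 then 1 else 0 := by
  rw [← coe_zeta_mul_apply, coe_zeta_mul_moebius, one_apply]

section AddCommMonoid

variable {M : Type*} [AddCommMonoid M]

theorem sum_divisors_filter_dvd {m d : ℕ} (hd : d ∣ m) (F : ℕ → M) :
    ∑ x ∈ m.divisors with d ∣ x, F x = ∑ a ∈ (m / d).divisors, F (d * a) := by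
  obtain ⟨k, rfl⟩ := hd
  obtain rfl | hd := d.eq_zero_or_pos
  · simp
  rw [Nat.mul_div_cancel_left k hd]
  symm
  refine sum_nbij (d * ·) ?_ (mul_right_injective₀ hd.ne').injOn ?_ fun _ _ ↦ rfl
  · intro a ha
    simp_all [Nat.mul_dvd_mul_iff_left, hd.ne']
  · intro x hx
    simp only [coe_filter, Set.mem_ofPred_eq, Nat.mem_divisors] at hx
    obtain ⟨⟨hxm, hm⟩, a, rfl⟩ := hx
    exact ⟨a, by simpa using ⟨Nat.dvd_of_mul_dvd_mul_left hd hxm, right_ne_zero_of_mul hm⟩, rfl⟩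

theorem sum_divisors_mul_eq_sum_coprime_div (m n : ℕ) (F : ℕ → M) :
    ∑ e ∈ (m * n).divisors, F e =
      ∑ x ∈ m.divisors, ∑ y ∈ n.divisors, if x.Coprime (n / y) then F (x * y) else 0 := by
  rw [← sum_product', ← sum_filter]
  have div_mul_gcd (e : ℕ) : e / e.gcd n * e.gcd n = e := Nat.div_mul_cancel (e.gcd_dvd_left n)
  refine sum_nbij' (fun e ↦ (e / e.gcd n, e.gcd n)) (fun z ↦ z.1 * z.2) ?_ ?_ ?_ ?_ ?_
  · intro e he
    obtain ⟨hmn, hm, hn⟩ : e ∣ m * n ∧ m ≠ 0 ∧ n ≠ 0 := by simpa using he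
    have hgcd : 0 < e.gcd n := Nat.gcd_pos_of_pos_right e (Nat.pos_of_ne_zero hn)
    have hcop : (e / e.gcd n).Coprime (n / e.gcd n) := Nat.coprime_div_gcd_div_gcd hgcd
    have hdvd : e / e.gcd n ∣ m := by
      refine hcop.dvd_of_dvd_mul_right ?_
      rw [← Nat.mul_div_assoc m (e.gcd_dvd_right n)]
      exact Nat.div_dvd_div (e.gcd_dvd_left n) hmn
    simpa [hm, hn, Nat.gcd_dvd_right] using ⟨hdvd, hcop⟩
  · rintro ⟨x, y⟩ hxy
    simp only [mem_filter, mem_product, Nat.mem_divisors] at hxy ⊢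
    obtain ⟨⟨⟨hxm, hm⟩, hyn, hn⟩, -⟩ := hxy
    exact ⟨mul_dvd_mul hxm hyn, mul_ne_zero hm hn⟩
  · exact fun e _ ↦ div_mul_gcd e
  · rintro ⟨x, y⟩ hxy
    simp only [mem_filter, mem_product, Nat.mem_divisors] at hxy
    obtain ⟨⟨-, hyn, hn⟩, hcop⟩ := hxy
    have hy : y ≠ 0 := ne_zero_of_dvd_ne_zero hn hyn
    have hgcd : (x * y).gcd n = y := (gcd_mul_eq_right_iff_coprime_div hy hyn).2 hcop
    simp only [hgcd, Nat.mul_div_cancel x (Nat.pos_of_ne_zero hy)]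
  · exact fun e _ ↦ congrArg F (div_mul_gcd e).symm

theorem sum_divisors_sum_divisors_gcd_div_comm {m n : ℕ} (hm : m ≠ 0) (hn : n ≠ 0)
    (G : ℕ → ℕ → ℕ → M) :
    ∑ x ∈ m.divisors, ∑ y ∈ n.divisors, ∑ d ∈ (x.gcd (n / y)).divisors, G d x y =
      ∑ d ∈ (m.gcd n).divisors, ∑ a ∈ (m / d).divisors, ∑ b ∈ (n / d).divisors,
        G d (d * a) b := by
  calc
    _ = ∑ x ∈ m.divisors, ∑ d ∈ (x.gcd n).divisors, ∑ y ∈ (n / d).divisors, G d x y := by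
      refine sum_congr rfl fun x _ ↦ sum_comm' fun y d ↦ ?_
      have div_comm : y ∣ n ∧ d ∣ n / y ↔ d ∣ n ∧ y ∣ n / d := by
        rw [dvd_and_dvd_div_iff_mul_dvd, dvd_and_dvd_div_iff_mul_dvd, mul_comm]
      have div_ne_zero {c : ℕ} (hc : c ∣ n) : n / c ≠ 0 :=
        (Nat.div_ne_zero_iff_of_dvd hc).2 ⟨hn, ne_zero_of_dvd_ne_zero hn hc⟩
      simp only [Nat.mem_divisors, Nat.dvd_gcd_iff, ne_eq, Nat.gcd_eq_zero_iff, hn, and_false,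
        not_false_eq_true, and_true]
      grind
    _ = ∑ d ∈ (m.gcd n).divisors, ∑ x ∈ m.divisors with d ∣ x,
          ∑ y ∈ (n / d).divisors, G d x y := by
      refine sum_comm' fun x d ↦ ?_
      simp only [Nat.mem_divisors, mem_filter, Nat.dvd_gcd_iff, ne_eq, Nat.gcd_eq_zero_iff, hm, hn]
      grind [dvd_trans]
    _ = _ := by
      refine sum_congr rfl fun d hd ↦ sum_divisors_filter_dvd ?_ _
      exact (Nat.dvd_of_mem_divisors hd).trans (m.gcd_dvd_left n)

end AddCommMonoid

theorem busche_ramanujan_tau_general {M : Type*} [AddCommGroup M] {m n : ℕ} (hm : m ≠ 0)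
    (hn : n ≠ 0) (F : ℕ → M) :
    ∑ e ∈ (m * n).divisors, F e =
      ∑ d ∈ (m.gcd n).divisors,
        μ d • ∑ a ∈ (m / d).divisors, ∑ b ∈ (n / d).divisors, F (d * a * b) := by
  have coprime_indicator (x k e : ℕ) :
      (if x.Coprime k then F e else 0) = ∑ d ∈ (x.gcd k).divisors, μ d • F e := by
    simp only [← sum_smul, sum_divisors_moebius, ite_smul, one_smul, zero_smul,
      Nat.coprime_iff_gcd_eq_one]
  simp_rw [sum_divisors_mul_eq_sum_coprime_div, coprime_indicator,
    sum_divisors_sum_divisors_gcd_div_comm hm hn, smul_sum]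

/-- **Busche–Ramanujan identity**: for positive integers `m` and `n`,
`τ(mn) = ∑_{d ∣ gcd(m,n)} τ(m/d) τ(n/d) μ(d)`. -/
theorem busche_ramanujan_tau (m n : ℕ) (hm : 0 < m) (hn : 0 < n) :
    ((m * n).divisors.card : ℤ) =
      ∑ d ∈ (Nat.gcd m n).divisors,
        ((m / d).divisors.card : ℤ) * ((n / d).divisors.card : ℤ) *
          ArithmeticFunction.moebius d := by
  simpa [mul_comm] using busche_ramanujan_tau_general hm.ne' hn.ne' fun _ ↦ (1 : ℤ)
end

section
/- For every real x ≥ 1, Σ_{m ≤ x} Σ_{n ≤ x} τ(m·n) = Σ_{l ≤ x} μ(l) · ( Σ_{j ≤ x/l} τ(j) )², where all summation variables range over positive integers. -/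
/-!
A divisor `d` of `m * n` factors uniquely as `d = a * b` with `a ∣ m`, `b ∣ n` and `m / a` coprime
to `b`, namely with `a = gcd d m`. Detecting the coprimality by `∑_{l ∣ gcd (m / a) b} μ(l)` and
substituting `b = l * b'` decouples `a ∣ m / l` from `b' ∣ n / l`, which for `f` completely
multiplicative gives the inverse Busche–Ramanujan identity
`∑_{d ∣ mn} f(d) = ∑_{l ∣ gcd m n} μ(l) f(l) (∑_{a ∣ m / l} f(a)) (∑_{b ∣ n / l} f(b))`.
Summing it over `m` and `n` and writing `m = l * i`, `n = l * j` decouples `i` from `j`.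
-/

open Finset ArithmeticFunction.Moebius

section Reindexing

variable {A : Type*} [AddCommMonoid A]

lemma sum_divisors_mul_eq_sum_filter_coprime (f : ℕ → A) (m n : ℕ) :
    ∑ d ∈ (m * n).divisors, f d =
      ∑ p ∈ m.divisors ×ˢ n.divisors with (m / p.1).Coprime p.2, f (p.1 * p.2) := by
  refine sum_bij' (fun d _ ↦ (d.gcd m, d / d.gcd m)) (fun p _ ↦ p.1 * p.2) ?_ ?_ ?_ ?_ ?_
  · intro d hd
    obtain ⟨d_dvd, mn_ne⟩ := Nat.mem_divisors.1 hd
    obtain ⟨hm, hn⟩ := mul_ne_zero_iff.1 mn_ne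
    have gcd_pos : 0 < d.gcd m := Nat.gcd_pos_of_pos_right d (Nat.pos_of_ne_zero hm)
    have coprime : (d / d.gcd m).Coprime (m / d.gcd m) := Nat.coprime_div_gcd_div_gcd gcd_pos
    have dvd_n : d / d.gcd m ∣ n := by
      refine coprime.dvd_of_dvd_mul_left (Nat.dvd_of_mul_dvd_mul_left gcd_pos ?_)
      rwa [Nat.mul_div_cancel' (Nat.gcd_dvd_left d m), ← mul_assoc,
        Nat.mul_div_cancel' (Nat.gcd_dvd_right d m)]
    simp only [mem_filter, mem_product, Nat.mem_divisors]
    exact ⟨⟨⟨Nat.gcd_dvd_right d m, hm⟩, dvd_n, hn⟩, coprime.symm⟩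
  · rintro ⟨a, b⟩ hp
    simp only [mem_filter, mem_product, Nat.mem_divisors] at hp
    obtain ⟨⟨⟨ha, hm⟩, hb, hn⟩, -⟩ := hp
    exact Nat.mem_divisors.2 ⟨mul_dvd_mul ha hb, mul_ne_zero hm hn⟩
  · exact fun d _ ↦ Nat.mul_div_cancel' (Nat.gcd_dvd_left d m)
  · rintro ⟨a, b⟩ hp
    simp only [mem_filter, mem_product, Nat.mem_divisors] at hp
    obtain ⟨⟨⟨⟨c, rfl⟩, hm⟩, -⟩, coprime⟩ := hp
    have ha : 0 < a := Nat.pos_of_ne_zero (left_ne_zero_of_mul hm)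
    rw [Nat.mul_div_cancel_left c ha] at coprime
    have gcd_eq : (a * b).gcd (a * c) = a := by
      rw [Nat.gcd_mul_left, coprime.symm.gcd_eq_one, mul_one]
    simp only [gcd_eq, Nat.mul_div_cancel_left b ha]
  · exact fun d _ ↦ congrArg f (Nat.mul_div_cancel' (Nat.gcd_dvd_left d m)).symm

lemma sum_divisors_sum_divisors_gcd_div (g : ℕ → ℕ → ℕ → A) (m n : ℕ) :
    ∑ p ∈ m.divisors ×ˢ n.divisors, ∑ l ∈ ((m / p.1).gcd p.2).divisors, g l p.1 p.2 =
      ∑ l ∈ (m.gcd n).divisors, ∑ p ∈ (m / l).divisors ×ˢ (n / l).divisors,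
        g l p.1 (l * p.2) := by
  rw [sum_sigma', sum_sigma']
  refine sum_bij' (fun s _ ↦ ⟨s.2, s.1.1, s.1.2 / s.2⟩) (fun s _ ↦ ⟨(s.2.1, s.1 * s.2.2), s.1⟩)
    ?_ ?_ ?_ ?_ ?_
  · rintro ⟨⟨a, b⟩, l⟩ hs
    simp only [mem_sigma, mem_product, Nat.mem_divisors, Nat.dvd_gcd_iff] at hs ⊢
    obtain ⟨⟨⟨ha, hm⟩, hb, hn⟩, ⟨hl_div, hlb⟩, -⟩ := hs
    have hlm : l ∣ m := hl_div.trans (Nat.div_dvd_of_dvd ha)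
    have hln : l ∣ n := hlb.trans hb
    have ha_div : a ∣ m / l := Nat.dvd_div_of_mul_dvd <| by
      rw [mul_comm]
      exact (Nat.dvd_div_iff_mul_dvd ha).1 hl_div
    have hml : m / l ≠ 0 :=
      (Nat.div_ne_zero_iff_of_dvd hlm).2 ⟨hm, ne_zero_of_dvd_ne_zero hm hlm⟩
    have hnl : n / l ≠ 0 :=
      (Nat.div_ne_zero_iff_of_dvd hln).2 ⟨hn, ne_zero_of_dvd_ne_zero hn hln⟩
    exact ⟨⟨⟨hlm, hln⟩, Nat.gcd_ne_zero_left hm⟩, ⟨ha_div, hml⟩, Nat.div_dvd_div hlb hb, hnl⟩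
  · rintro ⟨l, a, b⟩ hs
    simp only [mem_sigma, mem_product, Nat.mem_divisors, Nat.dvd_gcd_iff] at hs ⊢
    obtain ⟨⟨⟨hlm, hln⟩, -⟩, ⟨ha, hml⟩, hb, hnl⟩ := hs
    have hla : l * a ∣ m := (Nat.dvd_div_iff_mul_dvd hlm).1 ha
    have hlb : l * b ∣ n := (Nat.dvd_div_iff_mul_dvd hln).1 hb
    have hm : m ≠ 0 := ((Nat.div_ne_zero_iff_of_dvd hlm).1 hml).1
    have hn : n ≠ 0 := ((Nat.div_ne_zero_iff_of_dvd hln).1 hnl).1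
    have hl_div : l ∣ m / a := Nat.dvd_div_of_mul_dvd (by rwa [mul_comm])
    exact ⟨⟨⟨dvd_of_mul_left_dvd hla, hm⟩, hlb, hn⟩, ⟨hl_div, dvd_mul_right l b⟩,
      Nat.gcd_ne_zero_right (ne_zero_of_dvd_ne_zero hn hlb)⟩
  · rintro ⟨⟨a, b⟩, l⟩ hs
    simp only [mem_sigma, mem_product, Nat.mem_divisors, Nat.dvd_gcd_iff] at hs
    simp only [Nat.mul_div_cancel' hs.2.1.2]
  · rintro ⟨l, a, b⟩ hs
    simp only [mem_sigma, Nat.mem_divisors] at hs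
    have hl : 0 < l := Nat.pos_of_ne_zero (ne_zero_of_dvd_ne_zero hs.1.2 hs.1.1)
    simp only [Nat.mul_div_cancel_left b hl]
  · rintro ⟨⟨a, b⟩, l⟩ hs
    simp only [mem_sigma, mem_product, Nat.mem_divisors, Nat.dvd_gcd_iff] at hs
    simp only [Nat.mul_div_cancel' hs.2.1.2]

lemma sum_Icc_sum_divisors_gcd (g : ℕ → ℕ → ℕ → A) (M N : ℕ) :
    ∑ p ∈ Icc 1 M ×ˢ Icc 1 N, ∑ l ∈ (p.1.gcd p.2).divisors, g l (p.1 / l) (p.2 / l) =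
      ∑ l ∈ Icc 1 (min M N), ∑ p ∈ Icc 1 (M / l) ×ˢ Icc 1 (N / l), g l p.1 p.2 := by
  rw [sum_sigma', sum_sigma']
  refine sum_bij' (fun s _ ↦ ⟨s.2, s.1.1 / s.2, s.1.2 / s.2⟩)
    (fun s _ ↦ ⟨(s.1 * s.2.1, s.1 * s.2.2), s.1⟩) ?_ ?_ ?_ ?_ (fun _ _ ↦ rfl)
  · rintro ⟨⟨m, n⟩, l⟩ hs
    simp only [mem_sigma, mem_product, Nat.mem_divisors, Nat.dvd_gcd_iff, mem_Icc] at hs ⊢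
    obtain ⟨⟨⟨hm, hmM⟩, hn, hnN⟩, ⟨hlm, hln⟩, -⟩ := hs
    have hl : 0 < l := Nat.pos_of_dvd_of_pos hlm hm
    exact ⟨⟨hl, le_min ((Nat.le_of_dvd hm hlm).trans hmM) ((Nat.le_of_dvd hn hln).trans hnN)⟩,
      ⟨Nat.div_pos (Nat.le_of_dvd hm hlm) hl, Nat.div_le_div_right hmM⟩,
      Nat.div_pos (Nat.le_of_dvd hn hln) hl, Nat.div_le_div_right hnN⟩
  · rintro ⟨l, i, j⟩ hs
    simp only [mem_sigma, mem_product, Nat.mem_divisors, Nat.dvd_gcd_iff, mem_Icc] at hs ⊢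
    obtain ⟨⟨hl, -⟩, ⟨hi, hiM⟩, hj, hjN⟩ := hs
    have hli : 0 < l * i := Nat.mul_pos hl hi
    exact ⟨⟨⟨hli, (Nat.mul_le_mul_left l hiM).trans (Nat.mul_div_le M l)⟩,
      Nat.mul_pos hl hj, (Nat.mul_le_mul_left l hjN).trans (Nat.mul_div_le N l)⟩,
      ⟨dvd_mul_right l i, dvd_mul_right l j⟩, (Nat.gcd_pos_of_pos_left _ hli).ne'⟩
  · rintro ⟨⟨m, n⟩, l⟩ hs
    simp only [mem_sigma, Nat.mem_divisors, Nat.dvd_gcd_iff] at hs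
    simp only [Nat.mul_div_cancel' hs.2.1.1, Nat.mul_div_cancel' hs.2.1.2]
  · rintro ⟨l, i, j⟩ hs
    have hl : 0 < l := (mem_Icc.1 (mem_sigma.1 hs).1).1
    simp only [Nat.mul_div_cancel_left _ hl]

end Reindexing

lemma sum_divisors_gcd_moebius (m n : ℕ) :
    ∑ l ∈ (m.gcd n).divisors, μ l = if m.Coprime n then 1 else 0 := by
  rw [← ArithmeticFunction.coe_mul_zeta_apply, ArithmeticFunction.moebius_mul_coe_zeta,
    ArithmeticFunction.one_apply]

section CompletelyMultiplicative

variable {R : Type*} [CommRing R] (f : ℕ →* R)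

theorem sum_divisors_mul_eq_sum_divisors_gcd_moebius (m n : ℕ) :
    ∑ d ∈ (m * n).divisors, f d =
      ∑ l ∈ (m.gcd n).divisors,
        μ l * f l * ((∑ a ∈ (m / l).divisors, f a) * ∑ b ∈ (n / l).divisors, f b) :=
  calc
    ∑ d ∈ (m * n).divisors, f d
      = ∑ p ∈ m.divisors ×ˢ n.divisors with (m / p.1).Coprime p.2, f (p.1 * p.2) :=
        sum_divisors_mul_eq_sum_filter_coprime f m n
    _ = ∑ p ∈ m.divisors ×ˢ n.divisors, ∑ l ∈ ((m / p.1).gcd p.2).divisors,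
          μ l * f (p.1 * p.2) := by
        simp only [sum_filter, ← sum_mul, ← Int.cast_sum, sum_divisors_gcd_moebius, Int.cast_ite,
          Int.cast_one, Int.cast_zero, ite_mul, one_mul, zero_mul]
    _ = ∑ l ∈ (m.gcd n).divisors, ∑ p ∈ (m / l).divisors ×ˢ (n / l).divisors,
          μ l * f (p.1 * (l * p.2)) :=
        sum_divisors_sum_divisors_gcd_div (fun l a b ↦ μ l * f (a * b)) m n
    _ = _ := by
        refine sum_congr rfl fun l _ ↦ ?_
        rw [sum_mul_sum, ← sum_product', mul_sum]
        refine sum_congr rfl fun p _ ↦ ?_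
        rw [map_mul, map_mul]
        ring

theorem sum_tau_mul_eq_moebius_sum_general (M N : ℕ) :
    ∑ m ∈ Icc 1 M, ∑ n ∈ Icc 1 N, ∑ d ∈ (m * n).divisors, f d =
      ∑ l ∈ Icc 1 (min M N),
        μ l * f l * ((∑ i ∈ Icc 1 (M / l), ∑ d ∈ i.divisors, f d) *
          ∑ j ∈ Icc 1 (N / l), ∑ d ∈ j.divisors, f d) := by
  simp only [sum_divisors_mul_eq_sum_divisors_gcd_moebius, ← sum_product']
  rw [sum_Icc_sum_divisors_gcd
    (fun l i j ↦ μ l * f l * ((∑ a ∈ i.divisors, f a) * ∑ b ∈ j.divisors, f b))]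
  simp only [← mul_sum, sum_mul_sum, sum_product]

end CompletelyMultiplicative

/-- For every real `x ≥ 1`,
`∑_{m ≤ x} ∑_{n ≤ x} τ(mn) = ∑_{l ≤ x} μ(l) (∑_{j ≤ x/l} τ(j))²`. -/
theorem sum_tau_mul_eq_moebius_sum (x : ℝ) (hx : 1 ≤ x) :
    ∑ m ∈ Finset.Icc 1 ⌊x⌋₊, ∑ n ∈ Finset.Icc 1 ⌊x⌋₊, ((m * n).divisors.card : ℤ) =
      ∑ l ∈ Finset.Icc 1 ⌊x⌋₊,
        ArithmeticFunction.moebius l *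
          (∑ j ∈ Finset.Icc 1 ⌊x / (l : ℝ)⌋₊, ((j.divisors.card : ℤ))) ^ 2 := by
  simpa [Nat.floor_div_natCast, sq] using
    sum_tau_mul_eq_moebius_sum_general (1 : ℕ →* ℤ) ⌊x⌋₊ ⌊x⌋₊
end

section
/- For all complex numbers x, y with |x| < 1 and |y| < 1, the double series Σ_{a,b ≥ 0} (a + b + 1)·x^a·y^b converges absolutely and equals (1 − x·y) / ( (1 − x)²·(1 − y)² ). -/
/-!
Splitting `(a + b + 1) x^a y^b = (a + 1) x^a · y^b + x^a · b y^b` writes the double series as a sum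
of two products of absolutely convergent one-variable series. With `u = (1 - x)⁻¹` and
`v = (1 - y)⁻¹` its value is `u² · v + u · y v² = u² ((1 - y) + (1 - x) y) v² = u² (1 - xy) v²`.
The split is asymmetric so that `x` and `y` never need to commute.
-/

theorem natCast_add_add_one_mul_mul {R : Type*} [Semiring R] (a b : ℕ) (s t : R) :
    ((a + b + 1 : ℕ) : R) * s * t = (a + 1) * s * t + s * (b * t) := by
  rw [← mul_assoc s, ← (Nat.cast_commute b s).eq]
  push_cast
  noncomm_ring

section RingInverse

open scoped Ring

theorem inverse_sq_mul_inverse_add_inverse_mul_inverse_sq {R : Type*} [Ring R] {x y : R}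
    (hx : IsUnit (1 - x)) (hy : IsUnit (1 - y)) :
    (1 - x)⁻¹ʳ ^ 2 * (1 - y)⁻¹ʳ + (1 - x)⁻¹ʳ * (y * (1 - y)⁻¹ʳ ^ 2) =
      (1 - x)⁻¹ʳ ^ 2 * (1 - x * y) * (1 - y)⁻¹ʳ ^ 2 := by
  have inverse_x : (1 - x)⁻¹ʳ = (1 - x)⁻¹ʳ ^ 2 * (1 - x) := by
    rw [sq, Ring.inverse_mul_cancel_right _ _ hx]
  have inverse_y : (1 - y)⁻¹ʳ = (1 - y) * (1 - y)⁻¹ʳ ^ 2 := by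
    rw [sq, Ring.mul_inverse_cancel_left _ _ hy]
  calc (1 - x)⁻¹ʳ ^ 2 * (1 - y)⁻¹ʳ + (1 - x)⁻¹ʳ * (y * (1 - y)⁻¹ʳ ^ 2)
    _ = (1 - x)⁻¹ʳ ^ 2 * ((1 - y) * (1 - y)⁻¹ʳ ^ 2) +
          (1 - x)⁻¹ʳ ^ 2 * (1 - x) * (y * (1 - y)⁻¹ʳ ^ 2) := by
      rw [← inverse_x, ← inverse_y]
    _ = (1 - x)⁻¹ʳ ^ 2 * (1 - x * y) * (1 - y)⁻¹ʳ ^ 2 := by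
      noncomm_ring

variable {R : Type*} [NormedRing R]

theorem hasSum_mul_of_summable_norm {ι κ : Type*} {f : ι → R} {g : κ → R} {s t : R}
    (hf : HasSum f s) (hg : HasSum g t) (hf' : Summable fun i ↦ ‖f i‖)
    (hg' : Summable fun j ↦ ‖g j‖) : HasSum (fun q : ι × κ ↦ f q.1 * g q.2) (s * t) :=
  hf.mul hg (summable_mul_of_summable_norm' hf' hf.summable hg' hg.summable)

theorem summable_norm_coe_mul_geometric {x : R} (hx : ‖x‖ < 1) :
    Summable fun n : ℕ ↦ ‖(n : R) * x ^ n‖ := by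
  simpa only [pow_one] using summable_norm_pow_mul_geometric_of_norm_lt_one 1 hx

theorem summable_norm_add_one_mul_geometric {x : R} (hx : ‖x‖ < 1) :
    Summable fun n : ℕ ↦ ‖((n : R) + 1) * x ^ n‖ := by
  simp only [add_one_mul]
  exact .of_nonneg_of_le (fun _ ↦ norm_nonneg _) (fun _ ↦ norm_add_le _ _)
    ((summable_norm_coe_mul_geometric hx).add (summable_norm_geometric_of_norm_lt_one hx))

theorem summable_norm_add_add_one_mul_pow_mul_pow {x y : R} (hx : ‖x‖ < 1) (hy : ‖y‖ < 1) :
    Summable fun q : ℕ × ℕ ↦ ‖((q.1 + q.2 + 1 : ℕ) : R) * x ^ q.1 * y ^ q.2‖ := by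
  simp only [natCast_add_add_one_mul_mul]
  have left := (summable_norm_add_one_mul_geometric hx).mul_norm
    (summable_norm_geometric_of_norm_lt_one hy)
  have right := (summable_norm_geometric_of_norm_lt_one hx).mul_norm
    (summable_norm_coe_mul_geometric hy)
  exact .of_nonneg_of_le (fun _ ↦ norm_nonneg _) (fun _ ↦ norm_add_le _ _) (left.add right)

variable [HasSummableGeomSeries R]

theorem hasSum_add_one_mul_geometric {x : R} (hx : ‖x‖ < 1) :
    HasSum (fun n : ℕ ↦ ((n : R) + 1) * x ^ n) ((1 - x)⁻¹ʳ ^ 2) := by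
  simpa only [Nat.choose_one_right, Nat.cast_add_one, one_add_one_eq_two] using
    hasSum_choose_mul_geometric_of_norm_lt_one' 1 hx

theorem hasSum_add_add_one_mul_pow_mul_pow {x y : R} (hx : ‖x‖ < 1) (hy : ‖y‖ < 1) :
    HasSum (fun q : ℕ × ℕ ↦ ((q.1 + q.2 + 1 : ℕ) : R) * x ^ q.1 * y ^ q.2)
      ((1 - x)⁻¹ʳ ^ 2 * (1 - x * y) * (1 - y)⁻¹ʳ ^ 2) := by
  simp only [natCast_add_add_one_mul_mul]
  rw [← inverse_sq_mul_inverse_add_inverse_mul_inverse_sq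
    (isUnit_one_sub_of_norm_lt_one hx) (isUnit_one_sub_of_norm_lt_one hy)]
  have left := hasSum_mul_of_summable_norm
    (hasSum_add_one_mul_geometric hx) (hasSum_geom_series_inverse y hy)
    (summable_norm_add_one_mul_geometric hx) (summable_norm_geometric_of_norm_lt_one hy)
  have right := hasSum_mul_of_summable_norm
    (hasSum_geom_series_inverse x hx) (hasSum_coe_mul_geometric_of_norm_lt_one' hy)
    (summable_norm_geometric_of_norm_lt_one hx) (summable_norm_coe_mul_geometric hy)
  exact left.add right

theorem tsum_tau_power_series_general {x y : R} (hx : ‖x‖ < 1) (hy : ‖y‖ < 1) :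
    Summable (fun q : ℕ × ℕ ↦ ‖((q.1 + q.2 + 1 : ℕ) : R) * x ^ q.1 * y ^ q.2‖) ∧
      ∑' q : ℕ × ℕ, ((q.1 + q.2 + 1 : ℕ) : R) * x ^ q.1 * y ^ q.2 =
        (1 - x)⁻¹ʳ ^ 2 * (1 - x * y) * (1 - y)⁻¹ʳ ^ 2 :=
  ⟨summable_norm_add_add_one_mul_pow_mul_pow hx hy,
    (hasSum_add_add_one_mul_pow_mul_pow hx hy).tsum_eq⟩

end RingInverse

/-- For `|x| < 1`, `|y| < 1`, the series `∑_{a,b ≥ 0} (a+b+1) x^a y^b` converges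
absolutely and equals `(1 - xy)/((1-x)²(1-y)²)`. -/
theorem tsum_tau_power_series (x y : ℂ) (hx : ‖x‖ < 1) (hy : ‖y‖ < 1) :
    Summable (fun q : ℕ × ℕ => ‖((q.1 + q.2 + 1 : ℕ) : ℂ) * x ^ q.1 * y ^ q.2‖) ∧
      ∑' q : ℕ × ℕ, ((q.1 + q.2 + 1 : ℕ) : ℂ) * x ^ q.1 * y ^ q.2 =
        (1 - x * y) / ((1 - x) ^ 2 * (1 - y) ^ 2) := by
  obtain ⟨summable_norm, tsum_eq⟩ := tsum_tau_power_series_general hx hy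
  exact ⟨summable_norm, tsum_eq.trans (by simp only [Ring.inverse_eq_inv']; field_simp)⟩
end

section
/- For all complex z, w with Re z > 1 and Re w > 1, the double series Σ_{m,n ≥ 1} τ(m·n) · m^{−z} · n^{−w} converges absolutely and equals ζ(z)² · ζ(w)² / ζ(z + w). -/
/-!
For completely multiplicative `f` and `g`, let `C` be the sum of `f b * g c` over coprime pairs
`(b, c)`. Extracting the gcd, `(m, n) = (d b, d c)`, gives `(∑ f) (∑ g) = (∑ f g) C`. A divisor `k`
of `m n` is determined by `(m, k) = (a b, a c)` with `b`, `c` coprime, and then `k ∣ m n` means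
`c ∣ n`, say `n = e c`; hence `∑ τ(m n) f(m) g(n) = (∑ f) (∑ g) C`. Now eliminate `C` and take
`f n = n ^ (-z)` and `g n = n ^ (-w)`.
-/

theorem pnat_gcd_mul_left (d m n : ℕ+) : (d * m).gcd (d * n) = d * m.gcd n :=
  PNat.eq (Nat.gcd_mul_left d m n)

/-- The coprime pairs of positive integers: the pairs left after dividing out the gcd. -/
abbrev CoprimePair : Type := {p : ℕ+ × ℕ+ // p.1.Coprime p.2}

namespace CoprimePair

/-- The pair `(d * b, d * c)` with reduced form `(b, c)` and gcd `d`. -/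
def scale (x : ℕ+ × CoprimePair) : ℕ+ × ℕ+ := (x.1 * x.2.1.1, x.1 * x.2.1.2)

theorem gcd_scale (x : ℕ+ × CoprimePair) : (scale x).1.gcd (scale x).2 = x.1 := by
  have hcop : x.2.1.1.gcd x.2.1.2 = 1 := x.2.2
  rw [scale, pnat_gcd_mul_left, hcop, mul_one]

theorem scale_injective : Function.Injective scale := by
  rintro ⟨d, q⟩ ⟨d', q'⟩ h
  obtain rfl : d = d' := by simpa only [gcd_scale] using congrArg (fun p ↦ p.1.gcd p.2) h
  have hfst : q.1.1 = q'.1.1 := mul_left_cancel (congrArg Prod.fst h)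
  have hsnd : q.1.2 = q'.1.2 := mul_left_cancel (congrArg Prod.snd h)
  exact Prod.ext rfl (Subtype.ext (Prod.ext hfst hsnd))

theorem scale_surjective : Function.Surjective scale := by
  rintro ⟨m, n⟩
  obtain ⟨b, hb⟩ := m.gcd_dvd_left n
  obtain ⟨c, hc⟩ := m.gcd_dvd_right n
  have hcop : b.Coprime c := by
    apply mul_left_cancel (a := m.gcd n)
    rw [← pnat_gcd_mul_left, ← hb, ← hc, mul_one]
  exact ⟨(m.gcd n, ⟨(b, c), hcop⟩), Prod.ext hb.symm hc.symm⟩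

theorem scale_bijective : Function.Bijective scale := ⟨scale_injective, scale_surjective⟩

/-- The pair `(m, n) = (a * b, e * c)` together with the divisor `a * c` of `m * n`, for `(b, c)`
coprime. -/
def mulDivisor (x : (ℕ+ × ℕ+) × CoprimePair) :
    Σ p : ℕ+ × ℕ+, Nat.divisors (p.1 * p.2 : ℕ+) :=
  ⟨(x.1.1 * x.2.1.1, x.1.2 * x.2.1.2), (x.1.1 * x.2.1.2 : ℕ+), by
    rw [Nat.mem_divisors, ← PNat.dvd_iff, mul_mul_mul_comm, mul_comm x.2.1.1,
      mul_mul_mul_comm]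
    exact ⟨dvd_mul_right _ _, PNat.ne_zero _⟩⟩

theorem mulDivisor_injective : Function.Injective mulDivisor := by
  rintro ⟨⟨a, e⟩, q⟩ ⟨⟨a', e'⟩, q'⟩ h
  have hm : a * q.1.1 = a' * q'.1.1 := congrArg (fun t ↦ t.1.1) h
  have hn : e * q.1.2 = e' * q'.1.2 := congrArg (fun t ↦ t.1.2) h
  have hk : a * q.1.2 = a' * q'.1.2 := PNat.eq (congrArg (fun t ↦ (t.2 : ℕ)) h)
  obtain ⟨rfl, rfl⟩ := Prod.mk.inj (scale_injective (a₁ := (a, q)) (a₂ := (a', q'))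
    (Prod.ext hm hk))
  rw [mul_right_cancel hn]

theorem mulDivisor_surjective : Function.Surjective mulDivisor := by
  rintro ⟨⟨m, n⟩, k, hk⟩
  lift k to ℕ+ using Nat.pos_of_mem_divisors hk
  obtain ⟨⟨a, q⟩, hmk⟩ := scale_surjective (m, k)
  obtain ⟨rfl, rfl⟩ := Prod.mk.inj hmk
  have hdvd : (q.1.2 : ℕ) ∣ q.1.1 * n := by
    apply Nat.dvd_of_mul_dvd_mul_left a.pos
    simpa only [PNat.mul_coe, mul_assoc] using Nat.dvd_of_mem_divisors hk
  have hcop : Nat.Coprime q.1.2 q.1.1 := PNat.coprime_coe.mpr q.2.symm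
  obtain ⟨e, rfl⟩ : q.1.2 ∣ n := PNat.dvd_iff.mpr (hcop.dvd_of_dvd_mul_left hdvd)
  exact ⟨((a, e), q), Sigma.subtype_ext (Prod.ext rfl (mul_comm _ _)) rfl⟩

theorem mulDivisor_bijective : Function.Bijective mulDivisor :=
  ⟨mulDivisor_injective, mulDivisor_surjective⟩

end CoprimePair

theorem hasSum_pnat_prod_iff {M : Type*} [AddCommMonoid M] [TopologicalSpace M]
    {F : ℕ × ℕ → M} {a : M} (hF : ∀ m n, m * n = 0 → F (m, n) = 0) :
    HasSum (fun p : ℕ+ × ℕ+ ↦ F (p.1, p.2)) a ↔ HasSum F a := by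
  refine (PNat.coe_injective.prodMap PNat.coe_injective).hasSum_iff fun ⟨m, n⟩ hmn ↦ hF m n ?_
  contrapose! hmn
  obtain ⟨hm, hn⟩ := mul_ne_zero_iff.mp hmn
  exact ⟨(⟨m, hm.pos⟩, ⟨n, hn.pos⟩), rfl⟩

section NormedRing

variable {R : Type*} [NormedRing R] {f g : ℕ → R}

theorem summable_norm_pnat_mul (hf : Summable fun n ↦ ‖f n‖) (hg : Summable fun n ↦ ‖g n‖) :
    Summable fun p : ℕ+ × ℕ+ ↦ ‖f p.1 * g p.2‖ :=
  Summable.mul_norm (f := fun n : ℕ+ ↦ f n) (g := fun n : ℕ+ ↦ g n)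
    (hf.comp_injective PNat.coe_injective) (hg.comp_injective PNat.coe_injective)

theorem summable_norm_coprimePair_mul (hf : Summable fun n ↦ ‖f n‖)
    (hg : Summable fun n ↦ ‖g n‖) : Summable fun q : CoprimePair ↦ ‖f q.1.1 * g q.1.2‖ :=
  (summable_norm_pnat_mul hf hg).subtype _

theorem hasSum_pnat_mul [CompleteSpace R] (hf₀ : f 0 = 0) (hg₀ : g 0 = 0)
    (hf : Summable fun n ↦ ‖f n‖) (hg : Summable fun n ↦ ‖g n‖) :
    HasSum (fun p : ℕ+ × ℕ+ ↦ f p.1 * g p.2) ((∑' n, f n) * ∑' n, g n) := by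
  refine (hasSum_pnat_prod_iff (F := fun q ↦ f q.1 * g q.2) fun m n hmn ↦ ?_).mpr ?_
  · rcases mul_eq_zero.mp hmn with rfl | rfl
    · rw [hf₀, zero_mul]
    · rw [hg₀, mul_zero]
  · rw [tsum_mul_tsum_of_summable_norm hf hg]
    exact (summable_mul_of_summable_norm hf hg).hasSum

end NormedRing

section CompletelyMultiplicative

variable {R : Type*} [NormedCommRing R] [CompleteSpace R] {f g : ℕ →*₀ R}

theorem tsum_mul_tsum_eq_tsum_mul_tsum_coprimePair (hf : Summable fun n ↦ ‖f n‖)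
    (hg : Summable fun n ↦ ‖g n‖) :
    (∑' n, f n) * ∑' n, g n =
      (∑' n, f n * g n) * ∑' q : CoprimePair, f q.1.1 * g q.1.2 := by
  have hfg : Summable fun n : ℕ+ ↦ ‖f n * g n‖ :=
    (hf.mul_norm hg).comp_injective (i := fun n : ℕ+ ↦ ((n : ℕ), (n : ℕ)))
      fun _ _ h ↦ PNat.eq (congrArg Prod.fst h)
  have hC := summable_norm_coprimePair_mul hf hg
  rw [← (hasSum_pnat_mul (map_zero f) (map_zero g) hf hg).tsum_eq,
    ← (Equiv.ofBijective _ CoprimePair.scale_bijective).tsum_eq,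
    ← tsum_pnat_eq_tsum_of_eq_zero (f := fun n ↦ f n * g n) (by simp),
    tsum_mul_tsum_of_summable_norm hfg hC]
  refine tsum_congr fun ⟨d, q⟩ ↦ ?_
  simp only [Equiv.ofBijective_apply, CoprimePair.scale, PNat.mul_coe, map_mul]
  ring

theorem hasSum_sigma_divisors_mul (hf : Summable fun n ↦ ‖f n‖) (hg : Summable fun n ↦ ‖g n‖) :
    HasSum (fun t : Σ p : ℕ+ × ℕ+, Nat.divisors (p.1 * p.2 : ℕ+) ↦ f t.1.1 * g t.1.2)
      ((∑' n, f n) * (∑' n, g n) * ∑' q : CoprimePair, f q.1.1 * g q.1.2) := by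
  have hfg := summable_norm_pnat_mul hf hg
  have hC := summable_norm_coprimePair_mul hf hg
  rw [← (hasSum_pnat_mul (map_zero f) (map_zero g) hf hg).tsum_eq,
    tsum_mul_tsum_of_summable_norm hfg hC,
    ← (Equiv.ofBijective _ CoprimePair.mulDivisor_bijective).hasSum_iff]
  refine (summable_mul_of_summable_norm hfg hC).hasSum.congr_fun fun ⟨⟨a, e⟩, q⟩ ↦ ?_
  change f (a * q.1.1 : ℕ+) * g (e * q.1.2 : ℕ+) = f a * g e * (f q.1.1 * g q.1.2)
  simp only [PNat.mul_coe, map_mul]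
  ring

theorem hasSum_card_divisors_mul (hf : Summable fun n ↦ ‖f n‖) (hg : Summable fun n ↦ ‖g n‖) :
    HasSum (fun q : ℕ × ℕ ↦ ((q.1 * q.2).divisors.card : R) * f q.1 * g q.2)
      ((∑' n, f n) * (∑' n, g n) * ∑' q : CoprimePair, f q.1.1 * g q.1.2) := by
  refine (hasSum_pnat_prod_iff fun m n hmn ↦ by simp [hmn]).mp
    ((hasSum_sigma_divisors_mul hf hg).sigma fun p ↦ ?_)
  simpa [Function.comp_def, mul_assoc] using
    Finset.hasSum (Nat.divisors (p.1 * p.2 : ℕ+)) fun _ ↦ f p.1 * g p.2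

theorem tsum_mul_mul_tsum_card_divisors_mul (hf : Summable fun n ↦ ‖f n‖)
    (hg : Summable fun n ↦ ‖g n‖) :
    (∑' n, f n * g n) * ∑' q : ℕ × ℕ, ((q.1 * q.2).divisors.card : R) * f q.1 * g q.2 =
      (∑' n, f n) ^ 2 * (∑' n, g n) ^ 2 := by
  rw [(hasSum_card_divisors_mul hf hg).tsum_eq, mul_left_comm,
    ← tsum_mul_tsum_eq_tsum_mul_tsum_coprimePair hf hg]
  ring

end CompletelyMultiplicative

theorem riemannZetaSummandHom_mul_riemannZetaSummandHom {z w : ℂ} (hz : z ≠ 0) (hw : w ≠ 0)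
    (hzw : z + w ≠ 0) (n : ℕ) :
    riemannZetaSummandHom hz n * riemannZetaSummandHom hw n = riemannZetaSummandHom hzw n := by
  rcases eq_or_ne n 0 with rfl | hn
  · simp only [map_zero, mul_zero]
  · change (n : ℂ) ^ (-z) * (n : ℂ) ^ (-w) = (n : ℂ) ^ (-(z + w))
    rw [neg_add, Complex.cpow_add _ _ (Nat.cast_ne_zero.mpr hn)]

/-- For `Re z > 1`, `Re w > 1`, the double Dirichlet series `∑_{m,n ≥ 1} τ(mn) m^{-z} n^{-w}`
converges absolutely and equals `ζ(z)² ζ(w)² / ζ(z+w)`.  (The terms with `m = 0` or `n = 0`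
vanish, since `τ(0) = 0` and `0^{-z} = 0`.) -/
theorem tsum_tau_mul_eq_zeta (z w : ℂ) (hz : 1 < z.re) (hw : 1 < w.re) :
    Summable (fun q : ℕ × ℕ =>
        ‖((q.1 * q.2).divisors.card : ℂ) * (q.1 : ℂ) ^ (-z) * (q.2 : ℂ) ^ (-w)‖) ∧
      ∑' q : ℕ × ℕ, ((q.1 * q.2).divisors.card : ℂ) * (q.1 : ℂ) ^ (-z) * (q.2 : ℂ) ^ (-w) =
        riemannZeta z ^ 2 * riemannZeta w ^ 2 / riemannZeta (z + w) := by
  have hzw : 1 < (z + w).re := by rw [Complex.add_re]; linarith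
  have hf := summable_riemannZetaSummand hz
  have hg := summable_riemannZetaSummand hw
  refine ⟨(hasSum_card_divisors_mul hf hg).summable.norm, ?_⟩
  rw [eq_div_iff_mul_eq (riemannZeta_ne_zero_of_one_lt_re hzw), mul_comm,
    ← tsum_riemannZetaSummand hz, ← tsum_riemannZetaSummand hw, ← tsum_riemannZetaSummand hzw,
    ← tsum_mul_mul_tsum_card_divisors_mul hf hg]
  simp only [riemannZetaSummandHom_mul_riemannZetaSummandHom _ _ (Complex.ne_zero_of_one_lt_re hzw)]
  rfl
end

section
/- Let k ≥ 1 be an integer and define τ_{1,k}(n) as the number of ordered pairs (a,b) of positive integers with a·b^k = n. Then there exists a function h : ℕ×ℕ → ℂ such that the double series Σ_{m,n ≥ 1} |h(m,n)| · m^{−σ₁} · n^{−σ₂} converges for all real σ₁ > 1/(k+2) and σ₂ > 1/(k+2), and such that for all complex z, w with Re z > 1 and Re w > 1 one has Σ_{m,n ≥ 1} τ_{1,k}(m·n) · m^{−z} · n^{−w} = ζ(z) · ζ(w) · [ Π_{l=0}^{k} ζ(l·z + (k−l)·w) / Π_{l=1}^{k} ζ(l·z + (k+1−l)·w) ] ·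 Σ_{m,n ≥ 1} h(m,n) · m^{−z} · n^{−w}. -/
/-- `τ_{1,k}(n)` is the number of ordered pairs `(a,b)` of positive integers with `a·bᵏ = n`. -/
noncomputable def tau1k (k n : ℕ) : ℕ :=
  Nat.card {q : ℕ × ℕ // 0 < q.1 ∧ 0 < q.2 ∧ q.1 * q.2 ^ k = n}

/-!
`τ_{1,k}(mn)` is a multiplicative function of `(m, n)` whose value `⌊(i + j) / k⌋ + 1` at
`(pⁱ, pʲ)` does not depend on `p`. Hence its double Dirichlet series is an Euler product whose
factor at `p` is the rational function
`(1 + ∑_{0 < l < k} xˡ yᵏ⁻ˡ - ∑_{1 ≤ l ≤ k} xˡ yᵏ⁺¹⁻ˡ) / ((1 - x)(1 - y)(1 - xᵏ)(1 - yᵏ))`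
of `x = p⁻ᶻ` and `y = p⁻ʷ`. The zeta functions contribute the denominator and the factors
`1 - xˡ yᵏ⁻ˡ` and `(1 - xˡ yᵏ⁺¹⁻ˡ)⁻¹`, which cancel the numerator up to products of two monomials
of degree at least `max k 2`. What is left is a power series `1 + O(degree k + 2)` that converges
absolutely on the unit polydisc. If such a series is `1 + O(degree M)`, its factor at `p` is
`1 + O(p^(-M a))` when `Re z, Re w ≥ a`, so the Euler product converges absolutely for `M a > 1`.
-/

open Finset MvPowerSeries

section AbsoluteConvergence

variable {σ 𝕜 : Type*} [NormedField 𝕜]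

theorem norm_finsuppProd_pow_le {x : σ → 𝕜} {r : ℝ} (hx : ∀ i, ‖x i‖ ≤ r) (e : σ →₀ ℕ) :
    ‖e.prod fun i n => x i ^ n‖ ≤ r ^ e.degree := by
  rw [Finsupp.prod, norm_prod, Finsupp.degree_apply, ← prod_pow_eq_pow_sum]
  refine prod_le_prod (fun _ _ => norm_nonneg _) fun i _ => ?_
  rw [norm_pow]
  exact pow_le_pow_left₀ (norm_nonneg _) (hx i) _

theorem summable_norm_coeff_mul {r : ℝ} (hr : 0 ≤ r) {F G : MvPowerSeries σ 𝕜}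
    (hF : Summable fun e => ‖coeff e F‖ * r ^ e.degree)
    (hG : Summable fun e => ‖coeff e G‖ * r ^ e.degree) :
    Summable fun e => ‖coeff e (F * G)‖ * r ^ e.degree := by
  classical
  have h0 (F : MvPowerSeries σ 𝕜) : 0 ≤ fun e => ‖coeff e F‖ * r ^ e.degree :=
    fun _ => mul_nonneg (norm_nonneg _) (pow_nonneg hr _)
  have hFG := hF.mul_of_nonneg hG (h0 F) (h0 G)
  refine .of_nonneg_of_le (fun e => by positivity) (fun e => ?_)
    (summable_sum_mul_antidiagonal_of_summable_mul (A := σ →₀ ℕ)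
      (f := fun e => ‖coeff e F‖ * r ^ e.degree) (g := fun e => ‖coeff e G‖ * r ^ e.degree) hFG)
  rw [coeff_mul]
  calc ‖∑ p ∈ antidiagonal e, coeff p.1 F * coeff p.2 G‖ * r ^ e.degree
      ≤ (∑ p ∈ antidiagonal e, ‖coeff p.1 F‖ * ‖coeff p.2 G‖) * r ^ e.degree := by
        gcongr
        exact norm_sum_le_of_le _ fun p _ => norm_mul_le _ _
    _ = ∑ p ∈ antidiagonal e,
          ‖coeff p.1 F‖ * r ^ p.1.degree * (‖coeff p.2 G‖ * r ^ p.2.degree) := by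
        rw [sum_mul]
        refine sum_congr rfl fun p hp => ?_
        rw [← mem_antidiagonal.mp hp, map_add, pow_add]
        ring

variable (σ 𝕜) in
/-- The ring of power series that converge absolutely on the open unit polydisc. -/
def unitPolydiscSubring : Subring (MvPowerSeries σ 𝕜) where
  carrier := {F | ∀ r : ℝ, 0 ≤ r → r < 1 → Summable fun e => ‖coeff e F‖ * r ^ e.degree}
  mul_mem' hF hG r hr hr1 := summable_norm_coeff_mul hr (hF r hr hr1) (hG r hr hr1)
  one_mem' r _ _ := by
    classical
    refine summable_of_ne_finset_zero (s := {0}) fun e he => ?_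
    rw [coeff_one, if_neg (by simpa using he), norm_zero, zero_mul]
  add_mem' hF hG r hr hr1 := by
    refine .of_nonneg_of_le (fun e => by positivity) (fun e => ?_) ((hF r hr hr1).add (hG r hr hr1))
    rw [← add_mul, map_add]
    gcongr
    exact norm_add_le _ _
  zero_mem' r _ _ := by simp
  neg_mem' hF r hr hr1 := by simpa using hF r hr hr1

theorem monomial_mem_unitPolydiscSubring (d : σ →₀ ℕ) (a : 𝕜) :
    monomial d a ∈ unitPolydiscSubring σ 𝕜 := by
  classical
  intro r _ _
  refine summable_of_ne_finset_zero (s := {d}) fun e he => ?_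
  rw [coeff_monomial, if_neg (by simpa using he), norm_zero, zero_mul]

theorem summable_norm_coeff_mul_prod_pow {F : MvPowerSeries σ 𝕜}
    (hF : F ∈ unitPolydiscSubring σ 𝕜) [Finite σ] {x : σ → 𝕜} (hx : ∀ i, ‖x i‖ < 1) :
    Summable fun e => ‖coeff e F * e.prod fun i n => x i ^ n‖ := by
  cases nonempty_fintype σ
  obtain ⟨r, hr0, hr1, hxr⟩ : ∃ r : ℝ, 0 ≤ r ∧ r < 1 ∧ ∀ i, ‖x i‖ ≤ r := by
    refine ⟨‖fun i => (‖x i‖ : ℝ)‖, norm_nonneg _, ?_, fun i => ?_⟩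
    · exact (pi_norm_lt_iff one_pos).mpr fun i => by simpa using hx i
    · simpa using norm_le_pi_norm (fun i => (‖x i‖ : ℝ)) i
  refine .of_nonneg_of_le (fun e => norm_nonneg _) (fun e => ?_) (hF r hr0 hr1)
  rw [norm_mul]
  gcongr
  exact norm_finsuppProd_pow_le hxr e

/-- Evaluation at a point of the open unit polydisc. -/
noncomputable def evalUnitPolydisc [Finite σ] [CompleteSpace 𝕜] (x : σ → 𝕜)
    (hx : ∀ i, ‖x i‖ < 1) : unitPolydiscSubring σ 𝕜 →+* 𝕜 where
  toFun F := ∑' e, coeff e (F : MvPowerSeries σ 𝕜) * e.prod fun i n => x i ^ n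
  map_one' := by
    classical
    rw [tsum_eq_single 0 fun e he => by simp [coeff_one, he]]
    simp
  map_mul' F G := by
    classical
    have hF := summable_norm_coeff_mul_prod_pow F.2 hx
    have hG := summable_norm_coeff_mul_prod_pow G.2 hx
    have hFG := summable_mul_of_summable_norm hF hG
    rw [hF.of_norm.tsum_mul_tsum_eq_tsum_sum_antidiagonal hG.of_norm hFG]
    refine tsum_congr fun e => ?_
    rw [Subring.coe_mul, coeff_mul, sum_mul]
    refine sum_congr rfl fun p hp => ?_
    rw [← mem_antidiagonal.mp hp,
      Finsupp.prod_add_index' (fun i => pow_zero (x i)) fun i => pow_add (x i)]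
    ring
  map_zero' := by simp
  map_add' F G := by
    simp only [Subring.coe_add, map_add, add_mul]
    exact (summable_norm_coeff_mul_prod_pow F.2 hx).of_norm.tsum_add
      (summable_norm_coeff_mul_prod_pow G.2 hx).of_norm

theorem evalUnitPolydisc_monomial [Finite σ] [CompleteSpace 𝕜] {x : σ → 𝕜}
    (hx : ∀ i, ‖x i‖ < 1) (d : σ →₀ ℕ) (a : 𝕜) :
    evalUnitPolydisc x hx ⟨monomial d a, monomial_mem_unitPolydiscSubring d a⟩ =
      a * d.prod fun i n => x i ^ n := by
  classical
  change ∑' e, coeff e (monomial d a) * e.prod (fun i n => x i ^ n) = _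
  rw [tsum_eq_single d fun e he => by rw [coeff_monomial, if_neg he, zero_mul],
    coeff_monomial_same]

theorem constantCoeff_one_sub_monomial {σ R : Type*} [Ring R] {d : σ →₀ ℕ} (hd : d ≠ 0) :
    constantCoeff (1 - monomial d (1 : R)) = 1 := by
  classical
  rw [map_sub, map_one, ← coeff_zero_eq_constantCoeff_apply, coeff_monomial, if_neg hd.symm,
    sub_zero]

open scoped Classical in
theorem coeff_inv_one_sub_monomial {σ k : Type*} [Field k] {d : σ →₀ ℕ} (hd : d ≠ 0)
    (e : σ →₀ ℕ) :
    coeff e (1 - monomial d (1 : k))⁻¹ = if e ∈ AddSubmonoid.multiples d then 1 else 0 := by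
  have hc : constantCoeff (1 - monomial d (1 : k)) ≠ 0 := by
    simp only [constantCoeff_one_sub_monomial hd, ne_eq, one_ne_zero, not_false_eq_true]
  obtain ⟨G, hG⟩ : ∃ G : MvPowerSeries σ k,
      ∀ e, coeff e G = if e ∈ AddSubmonoid.multiples d then 1 else 0 := ⟨fun e => _, fun _ => rfl⟩
  suffices h : G = (1 - monomial d (1 : k))⁻¹ from h ▸ hG e
  refine (MvPowerSeries.eq_inv_iff_mul_eq_one hc).mpr (MvPowerSeries.ext fun e => ?_)
  have hmem : d ≤ e ∧ e - d ∈ AddSubmonoid.multiples d ↔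
      e ≠ 0 ∧ e ∈ AddSubmonoid.multiples d := by
    constructor
    · rintro ⟨hle, n, hn⟩
      refine ⟨fun h => hd (le_zero_iff.mp (h ▸ hle)), n + 1, ?_⟩
      calc (n + 1) • d = n • d + d := succ_nsmul d n
        _ = e := by rw [show n • d = e - d from hn, tsub_add_cancel_of_le hle]
    · rintro ⟨he, _ | n, rfl⟩
      · exact absurd (zero_nsmul d) he
      · simp only [succ_nsmul]
        exact ⟨le_add_self, n, (add_tsub_cancel_right _ _).symm⟩
  have h0 : (0 : σ →₀ ℕ) ∈ AddSubmonoid.multiples d := zero_mem _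
  rw [mul_sub, mul_one, map_sub, coeff_mul_monomial, coeff_one]
  simp only [hG, mul_one, ← ite_and, hmem]
  by_cases he : e = 0 <;> simp [he, h0]

theorem inv_one_sub_monomial_mem_unitPolydiscSubring (d : σ →₀ ℕ) :
    (1 - monomial d (1 : 𝕜))⁻¹ ∈ unitPolydiscSubring σ 𝕜 := by
  classical
  rcases eq_or_ne d 0 with rfl | hd
  · rw [monomial_zero_one, sub_self, MvPowerSeries.zero_inv]
    exact zero_mem _
  intro r hr0 hr1
  have hdeg : d.degree ≠ 0 := (Finsupp.degree_eq_zero_iff d).not.mpr hd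
  have hinj : Function.Injective fun n : ℕ => n • d := fun m n hmn =>
    Nat.eq_of_mul_eq_mul_right hdeg.bot_lt (by simpa using congrArg Finsupp.degree hmn)
  refine (hinj.summable_iff fun e he => ?_).mp ?_
  · rw [coeff_inv_one_sub_monomial hd, if_neg fun ⟨n, hn⟩ => he ⟨n, hn⟩, norm_zero, zero_mul]
  · refine (summable_geometric_of_lt_one (pow_nonneg hr0 d.degree)
      (pow_lt_one₀ hr0 hr1 hdeg)).congr fun n => ?_
    rw [Function.comp_apply, coeff_inv_one_sub_monomial hd, if_pos ⟨n, rfl⟩, norm_one, one_mul,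
      map_nsmul, ← pow_mul, smul_eq_mul, mul_comm]

theorem tsum_norm_coeff_mul_prod_pow_le [Finite σ] {F : MvPowerSeries σ 𝕜}
    (hF : F ∈ unitPolydiscSubring σ 𝕜) {M : ℕ} (hM : M ≤ (F - 1).order) {t r : ℝ} (ht : 0 ≤ t)
    (htr : t ≤ r) (hr0 : 0 < r) (hr1 : r < 1) {x : σ → 𝕜} (hx : ∀ i, ‖x i‖ ≤ t) :
    ∑' e, ‖coeff e F * e.prod fun i n => x i ^ n‖ ≤
      1 + (t / r) ^ M * ∑' e, ‖coeff e F‖ * r ^ e.degree := by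
  classical
  have hcoeff (e : σ →₀ ℕ) (he : e.degree < M) : coeff e F = if e = 0 then 1 else 0 := by
    rw [← coeff_one, ← sub_eq_zero, ← map_sub]
    exact coeff_of_lt_order (lt_of_lt_of_le (Nat.cast_lt.mpr he) hM)
  have hterm (e : σ →₀ ℕ) : ‖coeff e F * e.prod fun i n => x i ^ n‖ ≤
      (if e = 0 then 1 else 0) + (t / r) ^ M * (‖coeff e F‖ * r ^ e.degree) := by
    rcases lt_or_ge e.degree M with he | he
    · rw [hcoeff e he]
      split_ifs with h0
      · simp only [h0, Finsupp.prod_zero_index, mul_one, norm_one]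
        exact le_add_of_nonneg_right (by positivity)
      · simp
    · calc ‖coeff e F * e.prod fun i n => x i ^ n‖
          ≤ ‖coeff e F‖ * ((t / r) ^ e.degree * r ^ e.degree) := by
            rw [norm_mul, ← mul_pow, div_mul_cancel₀ t hr0.ne']
            gcongr
            exact norm_finsuppProd_pow_le hx e
        _ ≤ ‖coeff e F‖ * ((t / r) ^ M * r ^ e.degree) := by
            gcongr ‖coeff e F‖ * (?_ * _)
            exact pow_le_pow_of_le_one (by positivity) ((div_le_one hr0).mpr htr) he
        _ = (t / r) ^ M * (‖coeff e F‖ * r ^ e.degree) := by ring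
        _ ≤ _ := le_add_of_nonneg_left (by positivity)
  have hone : HasSum (fun e : σ →₀ ℕ => if e = 0 then (1 : ℝ) else 0) 1 := hasSum_ite_eq 0 1
  have hbound := hone.add ((hF r hr0.le hr1).hasSum.mul_left ((t / r) ^ M))
  exact hasSum_le hterm
    (summable_norm_coeff_mul_prod_pow hF fun i => ((hx i).trans htr).trans_lt hr1).hasSum hbound

/-- The geometric series `∑ₙ Xⁿᵈ` as an element of the ring of absolutely convergent series, with
the value `0` for `d = 0`. -/
noncomputable def geometricSeries (d : σ →₀ ℕ) : unitPolydiscSubring σ 𝕜 :=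
  ⟨(1 - monomial d 1)⁻¹, inv_one_sub_monomial_mem_unitPolydiscSubring d⟩

theorem geometricSeries_mul {d : σ →₀ ℕ} (hd : d ≠ 0) :
    geometricSeries d * (1 - ⟨monomial d 1, monomial_mem_unitPolydiscSubring d 1⟩) =
      (1 : unitPolydiscSubring σ 𝕜) :=
  Subtype.ext <| MvPowerSeries.inv_mul_cancel _ <| by
    simp only [constantCoeff_one_sub_monomial hd, ne_eq, one_ne_zero, not_false_eq_true]

theorem evalUnitPolydisc_geometricSeries [Finite σ] [CompleteSpace 𝕜] {x : σ → 𝕜}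
    (hx : ∀ i, ‖x i‖ < 1) (d : σ →₀ ℕ) :
    evalUnitPolydisc x hx (geometricSeries d) = (1 - d.prod fun i n => x i ^ n)⁻¹ := by
  rcases eq_or_ne d 0 with rfl | hd
  · have h0 : geometricSeries 0 = (0 : unitPolydiscSubring σ 𝕜) := Subtype.ext <| by
      simp [geometricSeries]
    simp [h0]
  refine eq_inv_of_mul_eq_one_left ?_
  have h := congrArg (evalUnitPolydisc x hx) (geometricSeries_mul (𝕜 := 𝕜) hd)
  rwa [map_mul, map_sub, map_one, evalUnitPolydisc_monomial, one_mul] at h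

end AbsoluteConvergence

section MultiplicativeFunctions

/-- A function of two natural numbers is multiplicative if it is supported on pairs of positive
integers, takes the value `1` at `(1, 1)`, and satisfies `f (q * q') = f q * f q'` whenever
`q.1 * q.2` and `q'.1 * q'.2` are coprime. -/
structure IsMultiplicative₂ {R : Type*} [MonoidWithZero R] (f : ℕ × ℕ → R) : Prop where
  map_one : f 1 = 1
  map_of_mul_eq_zero : ∀ q, q.1 * q.2 = 0 → f q = 0
  map_mul_of_coprime : ∀ q q', (q.1 * q.2).Coprime (q'.1 * q'.2) → f (q * q') = f q * f q'

theorem sum_divisorsAntidiagonal_prime_pow {M : Type*} [AddCommMonoid M] (f : ℕ × ℕ → M) {p : ℕ}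
    (hp : p.Prime) (e : ℕ) :
    ∑ q ∈ (p ^ e).divisorsAntidiagonal, f q = ∑ q ∈ antidiagonal e, f (p ^ q.1, p ^ q.2) := by
  rw [Nat.sum_divisorsAntidiagonal fun a b => f (a, b), Nat.sum_divisors_prime_pow hp,
    Finset.Nat.sum_antidiagonal_eq_sum_range_succ_mk]
  refine sum_congr rfl fun i hi => ?_
  rw [Nat.pow_div (Nat.lt_succ_iff.mp (mem_range.mp hi)) hp.pos]

section Fiberwise

variable {E : Type*} [AddCommGroup E] [UniformSpace E] [IsUniformAddGroup E] [CompleteSpace E]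
  [T2Space E]

theorem hasSum_sum_divisorsAntidiagonal {f : ℕ × ℕ → E} {a : E}
    (hf0 : ∀ q, q.1 * q.2 = 0 → f q = 0) (hf : HasSum f a) :
    HasSum (fun N : ℕ => ∑ q ∈ N.divisorsAntidiagonal, f q) a := by
  convert hf.tsum_fiberwise (fun q : ℕ × ℕ => q.1 * q.2) with N
  rcases eq_or_ne N 0 with rfl | hN
  · simp [fun b : (fun q : ℕ × ℕ => q.1 * q.2) ⁻¹' {0} => hf0 b b.2]
  · rw [show (fun q : ℕ × ℕ => q.1 * q.2) ⁻¹' {N} = N.divisorsAntidiagonal by ext; simp [hN],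
      Finset.tsum_subtype']

theorem hasSum_sum_antidiagonal {f : ℕ × ℕ → E} {a : E} (hf : HasSum f a) :
    HasSum (fun N : ℕ => ∑ q ∈ antidiagonal N, f q) a := by
  convert hf.tsum_fiberwise (fun q : ℕ × ℕ => q.1 + q.2) with N
  rw [show (fun q : ℕ × ℕ => q.1 + q.2) ⁻¹' {N} = antidiagonal N by ext; simp,
    Finset.tsum_subtype']

end Fiberwise

theorem summable_of_summable_sum_divisorsAntidiagonal {f : ℕ × ℕ → ℝ} (hf : 0 ≤ f)
    (hf0 : ∀ q, q.1 * q.2 = 0 → f q = 0)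
    (hsum : Summable fun N : ℕ => ∑ q ∈ N.divisorsAntidiagonal, f q) : Summable f := by
  refine summable_of_sum_le (c := ∑' N : ℕ, ∑ q ∈ N.divisorsAntidiagonal, f q) hf fun u => ?_
  calc ∑ q ∈ u, f q
      = ∑ N ∈ u.image fun q => q.1 * q.2, ∑ q ∈ u with q.1 * q.2 = N, f q :=
        (sum_fiberwise_of_maps_to (fun _ => mem_image_of_mem _) f).symm
    _ ≤ ∑ N ∈ u.image fun q => q.1 * q.2, ∑ q ∈ N.divisorsAntidiagonal, f q := by
        refine sum_le_sum fun N _ => ?_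
        rcases eq_or_ne N 0 with rfl | hN
        · simpa using sum_nonpos fun q hq => (hf0 q (mem_filter.mp hq).2).le
        · exact sum_le_sum_of_subset_of_nonneg
            (fun q hq => Nat.mem_divisorsAntidiagonal.mpr ⟨(mem_filter.mp hq).2, hN⟩)
            fun q _ _ => hf q
    _ ≤ ∑' N : ℕ, ∑ q ∈ N.divisorsAntidiagonal, f q :=
        hsum.sum_le_tsum _ fun N _ => sum_nonneg fun q _ => hf q

theorem summable_of_tsum_prime_pow_le {f : ℕ → ℝ} (hf : 0 ≤ f) (hf0 : f 0 = 0) (hf1 : f 1 = 1)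
    (hmul : ∀ {m n}, Nat.Coprime m n → f (m * n) = f m * f n) {a : ℕ → ℝ} (ha0 : 0 ≤ a)
    (ha : Summable a) (hs : ∀ {p : ℕ}, p.Prime → Summable fun n : ℕ => f (p ^ n))
    (hle : ∀ {p : ℕ}, p.Prime → ∑' n : ℕ, f (p ^ n) ≤ 1 + a p) : Summable f := by
  refine summable_of_sum_le (c := Real.exp (∑' n, a n)) hf fun u => ?_
  obtain ⟨N, hN⟩ := u.exists_nat_subset_range
  have hsmooth : HasSum (N.smoothNumbers.indicator f) (∏ p ∈ N.primesBelow, ∑' n, f (p ^ n)) :=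
    hasSum_subtype_iff_indicator.mp
      (EulerProduct.summable_and_hasSum_smoothNumbers_prod_primesBelow_tsum hf1 hmul
        (fun hp => (hs hp).norm) N).2
  calc ∑ n ∈ u, f n
      = ∑ n ∈ u, N.smoothNumbers.indicator f n := by
        refine sum_congr rfl fun n hn => ?_
        rcases eq_or_ne n 0 with rfl | hn0
        · rw [Set.indicator_apply, hf0, ite_self]
        · exact (Set.indicator_of_mem (Nat.mem_smoothNumbers_of_lt (Nat.pos_of_ne_zero hn0)
            (mem_range.mp (hN hn))) f).symm
    _ ≤ ∏ p ∈ N.primesBelow, ∑' n, f (p ^ n) :=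
        sum_le_hasSum u (fun n _ => Set.indicator_nonneg (fun n _ => hf n) n) hsmooth
    _ ≤ ∏ p ∈ N.primesBelow, Real.exp (a p) :=
        prod_le_prod (fun p _ => tsum_nonneg fun n => hf _) fun p hp =>
          (hle (Nat.prime_of_mem_primesBelow hp)).trans
            ((add_comm 1 (a p)).trans_le (Real.add_one_le_exp (a p)))
    _ = Real.exp (∑ p ∈ N.primesBelow, a p) := (Real.exp_sum _ _).symm
    _ ≤ Real.exp (∑' n, a n) := Real.exp_le_exp.mpr (ha.sum_le_tsum _ fun n _ => ha0 n)

namespace IsMultiplicative₂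

section Algebra

variable {R : Type*} [CommSemiring R] {f : ℕ × ℕ → R}

theorem sum_divisorsAntidiagonal_mul (hf : IsMultiplicative₂ f) {m n : ℕ} (hmn : m.Coprime n) :
    ∑ q ∈ (m * n).divisorsAntidiagonal, f q =
      (∑ q ∈ m.divisorsAntidiagonal, f q) * ∑ q ∈ n.divisorsAntidiagonal, f q := by
  simp only [Nat.sum_divisorsAntidiagonal fun a b => f (a, b)]
  rw [sum_mul_sum, ← sum_product', Nat.divisors_mul, ← Finset.image_mul_product,
    sum_image hmn.mul_injOn_divisors]
  refine sum_congr rfl fun d hd => ?_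
  obtain ⟨hd1, hd2⟩ := mem_product.mp hd
  have hm := Nat.mul_div_cancel' (Nat.dvd_of_mem_divisors hd1)
  have hn := Nat.mul_div_cancel' (Nat.dvd_of_mem_divisors hd2)
  rw [Nat.mul_div_mul_comm (Nat.dvd_of_mem_divisors hd1) (Nat.dvd_of_mem_divisors hd2)]
  exact hf.map_mul_of_coprime (d.1, m / d.1) (d.2, n / d.2) (by rwa [hm, hn])

theorem mul_twist (hf : IsMultiplicative₂ f) (χ ψ : ℕ →*₀ R) :
    IsMultiplicative₂ fun q => f q * χ q.1 * ψ q.2 where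
  map_one := by simp [hf.map_one]
  map_of_mul_eq_zero q hq := by rw [hf.map_of_mul_eq_zero q hq, zero_mul, zero_mul]
  map_mul_of_coprime q q' h := by
    rw [hf.map_mul_of_coprime q q' h, Prod.fst_mul, Prod.snd_mul, map_mul, map_mul]
    ring

end Algebra

section Analysis

variable {𝕜 : Type*} [NormedField 𝕜] {f : ℕ × ℕ → 𝕜}

protected theorem norm (hf : IsMultiplicative₂ f) : IsMultiplicative₂ fun q => ‖f q‖ where
  map_one := by rw [hf.map_one, norm_one]
  map_of_mul_eq_zero q hq := by rw [hf.map_of_mul_eq_zero q hq, norm_zero]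
  map_mul_of_coprime q q' h := by rw [hf.map_mul_of_coprime q q' h, norm_mul]

theorem summable_norm (hf : IsMultiplicative₂ f) {a : ℕ → ℝ} (ha0 : 0 ≤ a) (ha : Summable a)
    (hs : ∀ {p : ℕ}, p.Prime → Summable fun q : ℕ × ℕ => ‖f (p ^ q.1, p ^ q.2)‖)
    (hle : ∀ {p : ℕ}, p.Prime → ∑' q : ℕ × ℕ, ‖f (p ^ q.1, p ^ q.2)‖ ≤ 1 + a p) :
    Summable fun q => ‖f q‖ := by
  have hlocal {p : ℕ} (hp : p.Prime) :
      HasSum (fun e : ℕ => ∑ q ∈ (p ^ e).divisorsAntidiagonal, ‖f q‖)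
        (∑' q : ℕ × ℕ, ‖f (p ^ q.1, p ^ q.2)‖) := by
    simp only [sum_divisorsAntidiagonal_prime_pow (fun q => ‖f q‖) hp]
    exact hasSum_sum_antidiagonal (hs hp).hasSum
  refine summable_of_summable_sum_divisorsAntidiagonal (fun q => norm_nonneg _)
    hf.norm.map_of_mul_eq_zero ?_
  refine summable_of_tsum_prime_pow_le (fun N => sum_nonneg fun q _ => norm_nonneg _) (by simp)
    ?_ hf.norm.sum_divisorsAntidiagonal_mul ha0 ha (fun hp => (hlocal hp).summable)
    fun hp => (hlocal hp).tsum_eq.trans_le (hle hp)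
  rw [Nat.divisorsAntidiagonal_one, sum_singleton]
  exact hf.norm.map_one

theorem hasProd [CompleteSpace 𝕜] (hf : IsMultiplicative₂ f) (hsum : Summable fun q => ‖f q‖) :
    HasProd (fun p : Nat.Primes => ∑' q : ℕ × ℕ, f ((p : ℕ) ^ q.1, (p : ℕ) ^ q.2))
      (∑' q, f q) := by
  have hconv := hasSum_sum_divisorsAntidiagonal hf.map_of_mul_eq_zero hsum.of_norm.hasSum
  have hnorm : Summable fun N : ℕ => ‖∑ q ∈ N.divisorsAntidiagonal, f q‖ :=
    .of_nonneg_of_le (fun N => norm_nonneg _) (fun N => norm_sum_le _ _)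
      (hasSum_sum_divisorsAntidiagonal hf.norm.map_of_mul_eq_zero hsum.hasSum).summable
  have hprod := EulerProduct.eulerProduct_hasProd
    (by rw [Nat.divisorsAntidiagonal_one, sum_singleton]; exact hf.map_one)
    hf.sum_divisorsAntidiagonal_mul hnorm (by simp)
  rw [hconv.tsum_eq] at hprod
  convert hprod using 2 with p
  simp only [sum_divisorsAntidiagonal_prime_pow f p.2]
  have hinj : Function.Injective fun q : ℕ × ℕ => ((p : ℕ) ^ q.1, (p : ℕ) ^ q.2) :=
    (Nat.pow_right_injective p.2.two_le).prodMap (Nat.pow_right_injective p.2.two_le)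
  exact (hasSum_sum_antidiagonal (hsum.of_norm.comp_injective hinj).hasSum).tsum_eq.symm

end Analysis

end IsMultiplicative₂

end MultiplicativeFunctions

section EulerProducts

/-- The exponent of the monomial `X₀^q.1 * X₁^q.2` in two variables. -/
noncomputable def bidegree : ℕ × ℕ ≃ (Fin 2 →₀ ℕ) :=
  (finTwoArrowEquiv ℕ).symm.trans Finsupp.equivFunOnFinite.symm

theorem bidegree_zero : bidegree (0, 0) = 0 := by
  ext i; fin_cases i <;> rfl

theorem degree_bidegree (q : ℕ × ℕ) : (bidegree q).degree = q.1 + q.2 := by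
  rw [Finsupp.degree_eq_sum, Fin.sum_univ_two]; rfl

theorem bidegree_ne_zero {a b : ℕ} (h : a + b ≠ 0) : bidegree (a, b) ≠ 0 := by
  rwa [ne_eq, ← Finsupp.degree_eq_zero_iff, degree_bidegree]

theorem prod_bidegree {R : Type*} [CommMonoid R] (x : Fin 2 → R) (q : ℕ × ℕ) :
    ((bidegree q).prod fun i n => x i ^ n) = x 0 ^ q.1 * x 1 ^ q.2 := by
  rw [Finsupp.prod_fintype _ _ fun i => pow_zero (x i), Fin.prod_univ_two]; rfl

section Algebra

variable {R : Type*} [CommSemiring R]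

/-- The multiplicative function of two natural numbers whose values at `(p ^ i, p ^ j)` are the
coefficients of `F`, the same for every prime `p`. -/
noncomputable def eulerCoeff (F : MvPowerSeries (Fin 2) R) (q : ℕ × ℕ) : R :=
  if q.1 * q.2 = 0 then 0
  else ∏ p ∈ (q.1 * q.2).primeFactors, coeff (bidegree (q.1.factorization p, q.2.factorization p)) F

theorem eulerCoeff_of_mul_eq_zero (F : MvPowerSeries (Fin 2) R) {q : ℕ × ℕ} (hq : q.1 * q.2 = 0) :
    eulerCoeff F q = 0 :=
  if_pos hq

theorem eulerCoeff_of_mul_ne_zero (F : MvPowerSeries (Fin 2) R) {q : ℕ × ℕ} (hq : q.1 * q.2 ≠ 0) :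
    eulerCoeff F q = ∏ p ∈ (q.1 * q.2).primeFactors,
      coeff (bidegree (q.1.factorization p, q.2.factorization p)) F :=
  if_neg hq

theorem factorization_mul_of_mem_primeFactors {q q' : ℕ × ℕ}
    (h : (q.1 * q.2).Coprime (q'.1 * q'.2)) {p : ℕ} (hp : p ∈ (q.1 * q.2).primeFactors) :
    ((q * q').1.factorization p, (q * q').2.factorization p) =
      (q.1.factorization p, q.2.factorization p) := by
  have hpq' : ¬ p ∣ q'.1 * q'.2 := fun hdvd =>
    (Nat.prime_of_mem_primeFactors hp).ne_one
      (Nat.eq_one_of_dvd_coprimes h (Nat.dvd_of_mem_primeFactors hp) hdvd)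
  have h1 : q.1.Coprime q'.1 := h.coprime_mul_right.coprime_mul_right_right
  have h2 : q.2.Coprime q'.2 := h.coprime_mul_left.coprime_mul_left_right
  rw [Prod.fst_mul, Prod.snd_mul, Nat.factorization_mul_apply_of_coprime h1,
    Nat.factorization_mul_apply_of_coprime h2,
    Nat.factorization_eq_zero_of_not_dvd fun hdvd => hpq' (hdvd.mul_right _),
    Nat.factorization_eq_zero_of_not_dvd fun hdvd => hpq' (hdvd.mul_left _), add_zero, add_zero]

theorem isMultiplicative₂_eulerCoeff (F : MvPowerSeries (Fin 2) R) :
    IsMultiplicative₂ (eulerCoeff F) where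
  map_one := by simp [eulerCoeff]
  map_of_mul_eq_zero _ := eulerCoeff_of_mul_eq_zero F
  map_mul_of_coprime q q' h := by
    have hmul : (q * q').1 * (q * q').2 = q.1 * q.2 * (q'.1 * q'.2) := mul_mul_mul_comm ..
    by_cases hq : q.1 * q.2 = 0
    · rw [eulerCoeff_of_mul_eq_zero F hq, zero_mul,
        eulerCoeff_of_mul_eq_zero F (by rw [hmul, hq, zero_mul])]
    by_cases hq' : q'.1 * q'.2 = 0
    · rw [eulerCoeff_of_mul_eq_zero F hq', mul_zero,
        eulerCoeff_of_mul_eq_zero F (by rw [hmul, hq', mul_zero])]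
    rw [eulerCoeff_of_mul_ne_zero F hq, eulerCoeff_of_mul_ne_zero F hq',
      eulerCoeff_of_mul_ne_zero F (hmul ▸ mul_ne_zero hq hq'), hmul, h.primeFactors_mul,
      prod_union h.disjoint_primeFactors]
    congr 1
    · refine prod_congr rfl fun p hp => ?_
      rw [factorization_mul_of_mem_primeFactors h hp]
    · refine prod_congr rfl fun p hp => ?_
      rw [mul_comm q q', factorization_mul_of_mem_primeFactors h.symm hp]

theorem eulerCoeff_prime_pow {F : MvPowerSeries (Fin 2) R} (hF : constantCoeff F = 1) {p : ℕ}
    (hp : p.Prime) (i j : ℕ) : eulerCoeff F (p ^ i, p ^ j) = coeff (bidegree (i, j)) F := by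
  have hne : p ^ i * p ^ j ≠ 0 := mul_ne_zero (pow_ne_zero i hp.ne_zero) (pow_ne_zero j hp.ne_zero)
  rw [eulerCoeff_of_mul_ne_zero F hne]
  rcases eq_or_ne (i + j) 0 with hij | hij
  · obtain ⟨rfl, rfl⟩ := Nat.add_eq_zero_iff.mp hij
    simp [bidegree_zero, hF]
  · simp [← pow_add, Nat.primeFactors_prime_pow hij hp, hp.factorization_self]

end Algebra

section Analysis

theorem norm_natCast_cpow_neg_le {p : ℕ} (hp : p ≠ 0) {a : ℝ} {s : ℂ} (ha : a ≤ s.re) :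
    ‖(p : ℂ) ^ (-s)‖ ≤ (p : ℝ) ^ (-a) := by
  rw [Complex.norm_natCast_cpow_of_pos (Nat.pos_of_ne_zero hp), Complex.neg_re]
  exact Real.rpow_le_rpow_of_exponent_le (Nat.one_le_cast.mpr (Nat.one_le_iff_ne_zero.mpr hp))
    (neg_le_neg ha)

variable {F : MvPowerSeries (Fin 2) ℂ} {z w : ℂ}

/-- The point `(p ^ (-z), p ^ (-w))` at which the local factor at `p` of a double Dirichlet series
in `z` and `w` is evaluated. -/
noncomputable def primePoint (z w : ℂ) (p : ℕ) : Fin 2 → ℂ :=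
  ![(p : ℂ) ^ (-z), (p : ℂ) ^ (-w)]

theorem norm_primePoint_le {a : ℝ} (hz : a ≤ z.re) (hw : a ≤ w.re) {p : ℕ} (hp : p ≠ 0)
    (i : Fin 2) : ‖primePoint z w p i‖ ≤ (p : ℝ) ^ (-a) := by
  fin_cases i
  exacts [norm_natCast_cpow_neg_le hp hz, norm_natCast_cpow_neg_le hp hw]

theorem norm_primePoint_lt_one (hz : 0 < z.re) (hw : 0 < w.re) {p : ℕ} (hp : p.Prime)
    (i : Fin 2) : ‖primePoint z w p i‖ < 1 :=
  (norm_primePoint_le (min_le_left ..) (min_le_right ..) hp.ne_zero i).trans_lt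
    (Real.rpow_lt_one_of_one_lt_of_neg (Nat.one_lt_cast.mpr hp.one_lt)
      (neg_neg_of_pos (lt_min hz hw)))

theorem isMultiplicative₂_eulerCoeff_mul_cpow (F : MvPowerSeries (Fin 2) ℂ) (hz : z ≠ 0)
    (hw : w ≠ 0) :
    IsMultiplicative₂ fun q => eulerCoeff F q * (q.1 : ℂ) ^ (-z) * (q.2 : ℂ) ^ (-w) :=
  (isMultiplicative₂_eulerCoeff F).mul_twist (riemannZetaSummandHom hz) (riemannZetaSummandHom hw)

theorem eulerCoeff_mul_cpow_prime_pow (hF : constantCoeff F = 1) (z w : ℂ) {p : ℕ} (hp : p.Prime)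
    (q : ℕ × ℕ) :
    eulerCoeff F (p ^ q.1, p ^ q.2) * ((p ^ q.1 : ℕ) : ℂ) ^ (-z) * ((p ^ q.2 : ℕ) : ℂ) ^ (-w) =
      coeff (bidegree q) F *
        (bidegree q).prod fun i n => primePoint z w p i ^ n := by
  have hpow (s : ℂ) (n : ℕ) : ((p ^ n : ℕ) : ℂ) ^ s = ((p : ℂ) ^ s) ^ n := by
    rw [Nat.cast_pow, ← Complex.natCast_cpow_natCast_mul, Complex.cpow_nat_mul]
  rw [eulerCoeff_prime_pow hF hp, prod_bidegree, hpow, hpow, mul_assoc]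
  rfl

theorem one_le_order_sub_one_iff {σ R : Type*} [Ring R] {F : MvPowerSeries σ R} :
    1 ≤ (F - 1).order ↔ constantCoeff F = 1 := by
  rw [one_le_order_iff_constCoeff_eq_zero, map_sub, map_one, sub_eq_zero]

theorem summable_norm_eulerCoeff_mul_cpow (hF : F ∈ unitPolydiscSubring (Fin 2) ℂ) {M : ℕ}
    (hM : M ≤ (F - 1).order) (hz : 1 < M * z.re) (hw : 1 < M * w.re) :
    Summable fun q : ℕ × ℕ => ‖eulerCoeff F q * (q.1 : ℂ) ^ (-z) * (q.2 : ℂ) ^ (-w)‖ := by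
  have hM0 : M ≠ 0 := by
    rintro rfl
    norm_num at hz
  have hF1 : constantCoeff F = 1 := one_le_order_sub_one_iff.mp <|
    le_trans (mod_cast Nat.one_le_iff_ne_zero.mpr hM0) hM
  obtain ⟨a, haz, haw, ha⟩ : ∃ a, a ≤ z.re ∧ a ≤ w.re ∧ 1 < M * a :=
    ⟨min z.re w.re, min_le_left .., min_le_right .., by
      rcases min_choice z.re w.re with h | h <;> rwa [h]⟩
  have ha0 : 0 < a := pos_of_mul_pos_right (one_pos.trans ha) M.cast_nonneg
  have hz0 : z ≠ 0 := by rintro rfl; exact haz.not_gt ha0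
  have hw0 : w ≠ 0 := by rintro rfl; exact haw.not_gt ha0
  -- All the points at which local factors are evaluated lie in the polydisc of radius `2 ^ (-a)`,
  -- so the majorant of `F` at that single radius bounds every local factor.
  have hr1 : (2 : ℝ) ^ (-a) < 1 :=
    Real.rpow_lt_one_of_one_lt_of_neg one_lt_two (neg_neg_of_pos ha0)
  have hpr {p : ℕ} (hp : p.Prime) : (p : ℝ) ^ (-a) ≤ 2 ^ (-a) :=
    Real.rpow_le_rpow_of_nonpos two_pos (mod_cast hp.two_le) (neg_nonpos.mpr ha0.le)
  refine (isMultiplicative₂_eulerCoeff_mul_cpow F hz0 hw0).summable_norm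
    (a := fun n => ((n : ℝ) ^ (-a) / 2 ^ (-a)) ^ M *
      ∑' e, ‖coeff e F‖ * ((2 : ℝ) ^ (-a)) ^ e.degree)
    (fun n => by positivity) ?_ (fun hp => ?_) fun hp => ?_
  · have hsum : Summable fun n : ℕ => (n : ℝ) ^ (-a * M) :=
      Real.summable_nat_rpow.mpr (by linarith)
    refine .mul_right _ ((hsum.div_const (((2 : ℝ) ^ (-a)) ^ M)).congr fun n => ?_)
    rw [div_pow, Real.rpow_mul_natCast n.cast_nonneg]
  · simp only [eulerCoeff_mul_cpow_prime_pow hF1 z w hp]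
    exact bidegree.summable_iff.mpr
      (summable_norm_coeff_mul_prod_pow hF
        (norm_primePoint_lt_one (ha0.trans_le haz) (ha0.trans_le haw) hp))
  · simp only [eulerCoeff_mul_cpow_prime_pow hF1 z w hp]
    exact (bidegree.tsum_eq _).trans_le
      (tsum_norm_coeff_mul_prod_pow_le hF hM (by positivity) (hpr hp) (by positivity) hr1
        (norm_primePoint_le haz haw hp.ne_zero))

theorem summable_norm_eulerCoeff_mul_rpow (hF : F ∈ unitPolydiscSubring (Fin 2) ℂ) {M : ℕ}
    (hM : M ≤ (F - 1).order) {σ₁ σ₂ : ℝ} (h₁ : 1 < M * σ₁) (h₂ : 1 < M * σ₂) :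
    Summable fun q : ℕ × ℕ => ‖eulerCoeff F q‖ * (q.1 : ℝ) ^ (-σ₁) * (q.2 : ℝ) ^ (-σ₂) := by
  have hre {σ : ℝ} (h : 1 < M * σ) : (-(σ : ℂ)).re ≠ 0 := by
    rw [Complex.neg_re, Complex.ofReal_re, neg_ne_zero]
    exact right_ne_zero_of_mul (one_pos.trans h).ne'
  refine (summable_norm_eulerCoeff_mul_cpow hF hM (z := σ₁) (w := σ₂) h₁ h₂).congr fun q => ?_
  rw [norm_mul, norm_mul, Complex.norm_natCast_cpow_of_re_ne_zero _ (hre h₁),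
    Complex.norm_natCast_cpow_of_re_ne_zero _ (hre h₂), Complex.neg_re, Complex.neg_re,
    Complex.ofReal_re, Complex.ofReal_re]

theorem hasProd_evalUnitPolydisc (F : unitPolydiscSubring (Fin 2) ℂ) (hz : 1 < z.re)
    (hw : 1 < w.re) (hF : constantCoeff (F : MvPowerSeries (Fin 2) ℂ) = 1) :
    HasProd (fun p : Nat.Primes => evalUnitPolydisc _
        (norm_primePoint_lt_one (one_pos.trans hz) (one_pos.trans hw) p.2) F)
      (∑' q : ℕ × ℕ, eulerCoeff (F : MvPowerSeries (Fin 2) ℂ) q * (q.1 : ℂ) ^ (-z) *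
        (q.2 : ℂ) ^ (-w)) := by
  have hsum := summable_norm_eulerCoeff_mul_cpow F.2 (M := 1) (z := z) (w := w)
    (mod_cast one_le_order_sub_one_iff.mpr hF) (by simpa using hz) (by simpa using hw)
  have hprod := (isMultiplicative₂_eulerCoeff_mul_cpow F (Complex.ne_zero_of_one_lt_re hz)
    (Complex.ne_zero_of_one_lt_re hw)).hasProd hsum
  convert hprod using 2 with p
  simp only [eulerCoeff_mul_cpow_prime_pow hF z w p.2]
  exact (bidegree.tsum_eq _).symm

end Analysis

end EulerProducts

section TauSeries

/-- The power series `∑ᵢⱼ aᵢ₊ⱼ X₀ⁱ X₁ʲ` attached to `f = ∑ₙ aₙ tⁿ`. -/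
noncomputable def degreeSeries {R : Type*} [Semiring R] (f : PowerSeries R) :
    MvPowerSeries (Fin 2) R :=
  fun e => PowerSeries.coeff e.degree f

theorem coeff_degreeSeries {R : Type*} [Semiring R] (f : PowerSeries R) (e : Fin 2 →₀ ℕ) :
    coeff e (degreeSeries f) = PowerSeries.coeff e.degree f :=
  rfl

theorem sub_mul_degreeSeries {R : Type*} [CommRing R] (f : PowerSeries R) :
    (X 0 - X 1) * degreeSeries f = X 0 * f.subst (X 0 : MvPowerSeries (Fin 2) R) -
      X 1 * f.subst (X 1 : MvPowerSeries (Fin 2) R) := by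
  ext e
  have hX (s : Fin 2) (φ : MvPowerSeries (Fin 2) R) :
      coeff e (X s * φ) = if 1 ≤ e s then coeff (e - Finsupp.single s 1) φ else 0 := by
    simp only [X_def, coeff_monomial_mul, one_mul, Finsupp.single_le_iff]
  have hsingle (s t : Fin 2) (hst : s ≠ t) :
      e - Finsupp.single s 1 = Finsupp.single s ((e - Finsupp.single s 1 : Fin 2 →₀ ℕ) s) ↔
        e t = 0 := by
    rw [Finsupp.ext_iff, Fin.forall_fin_two]
    fin_cases s <;> fin_cases t <;> simp at hst ⊢
  simp only [sub_mul, map_sub, hX, coeff_degreeSeries, PowerSeries.coeff_subst_single,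
    hsingle 0 1 (by decide), hsingle 1 0 (by decide)]
  simp only [Finsupp.degree_eq_sum, Fin.sum_univ_two, Finsupp.tsub_apply, Finsupp.single_apply]
  rcases Nat.eq_zero_or_pos (e 0) with h0 | h0 <;> rcases Nat.eq_zero_or_pos (e 1) with h1 | h1
  · simp [h0, h1]
  · simp [h0, Nat.one_le_iff_ne_zero, h1.ne']
  · simp [h1, Nat.one_le_iff_ne_zero, h0.ne']
  · have hdeg : e 0 - 1 + e 1 = e 0 + (e 1 - 1) := by omega
    simp [Nat.one_le_iff_ne_zero, h0.ne', h1.ne', hdeg]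

theorem sub_mul_sum_Ico_pow_mul_pow {R : Type*} [CommRing R] (x y : R) {n : ℕ} (hn : 1 ≤ n) :
    (x - y) * ∑ l ∈ Ico 1 n, x ^ l * y ^ (n - l) = x ^ n * y - x * y ^ n := by
  have hsum : ∑ l ∈ Ico 1 n, x ^ l * y ^ (n - l) =
      (∑ l ∈ Ico 1 n, x ^ l * y ^ (n - 1 - l)) * y := by
    rw [sum_mul]
    refine sum_congr rfl fun l hl => ?_
    rw [mul_assoc, ← pow_succ, Nat.sub_right_comm, Nat.sub_add_cancel]
    exact Nat.sub_pos_of_lt (mem_Ico.mp hl).2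
  rw [hsum, ← mul_assoc, (Commute.all x y).mul_geom_sum₂_Ico hn, sub_mul, pow_one, mul_assoc,
    pow_sub_one_mul (Nat.one_le_iff_ne_zero.mp hn)]

/-- The power series with coefficients `⌊n / k⌋ + 1`. -/
noncomputable def floorDivSeries (R : Type*) [Semiring R] (k : ℕ) : PowerSeries R :=
  PowerSeries.mk fun n => ((n / k + 1 : ℕ) : R)

theorem floorDivSeries_mul {R : Type*} [CommRing R] {k : ℕ} (hk : 1 ≤ k) :
    floorDivSeries R k * ((1 - PowerSeries.X) * (1 - PowerSeries.X ^ k)) = 1 := by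
  have hmk : floorDivSeries R k * (1 - PowerSeries.X ^ k) = PowerSeries.mk 1 := by
    ext n
    rw [mul_sub, mul_one, map_sub, PowerSeries.coeff_mul_X_pow', floorDivSeries]
    simp only [PowerSeries.coeff_mk, Pi.one_apply]
    split_ifs with hkn
    · rw [Nat.div_eq_sub_div hk hkn]
      push_cast
      ring
    · simp [Nat.div_eq_of_lt (not_le.mp hkn)]
  rw [mul_comm (1 - PowerSeries.X), ← mul_assoc, hmk, PowerSeries.mk_one_mul_one_sub_eq_one]

theorem degreeSeries_floorDivSeries_mul {R : Type*} [CommRing R] [IsDomain R] {k : ℕ}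
    (hk : 1 ≤ k) :
    degreeSeries (floorDivSeries R k) * ((1 - X 0) * (1 - X 1) * (1 - X 0 ^ k) * (1 - X 1 ^ k)) =
      1 + ∑ l ∈ Ico 1 k, X 0 ^ l * X 1 ^ (k - l) -
        ∑ l ∈ Icc 1 k, X 0 ^ l * X 1 ^ (k + 1 - l) := by
  have hsubst (i : Fin 2) : (floorDivSeries R k).subst (X i : MvPowerSeries (Fin 2) R) *
      ((1 - X i) * (1 - X i ^ k)) = 1 := by
    have h := congrArg (PowerSeries.substAlgHom (R := R) (PowerSeries.HasSubst.X (S := R) i))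
      (floorDivSeries_mul (R := R) hk)
    rwa [map_mul, map_mul, map_sub, map_sub, map_pow, map_one, PowerSeries.coe_substAlgHom,
      PowerSeries.subst_X (PowerSeries.HasSubst.X (S := R) i)] at h
  have hne : (X 0 - X 1 : MvPowerSeries (Fin 2) R) ≠ 0 :=
    sub_ne_zero.mpr fun h => Fin.zero_ne_one (X_inj.mp h)
  refine mul_left_cancel₀ hne ?_
  rw [mul_sub (X 0 - X 1), mul_add (X 0 - X 1), sub_mul_sum_Ico_pow_mul_pow _ _ hk,
    ← Ico_add_one_right_eq_Icc, sub_mul_sum_Ico_pow_mul_pow _ _ (Nat.le_add_left 1 k), ← mul_assoc,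
    sub_mul_degreeSeries]
  linear_combination (X 0 * (1 - X 1) * (1 - X 1 ^ k)) * hsubst 0 -
    (X 1 * (1 - X 0) * (1 - X 0 ^ k)) * hsubst 1

theorem tau1k_zero (k : ℕ) : tau1k k 0 = 0 := by
  have : IsEmpty {q : ℕ × ℕ // 0 < q.1 ∧ 0 < q.2 ∧ q.1 * q.2 ^ k = 0} :=
    ⟨fun q => (Nat.mul_pos q.2.1 (pow_pos q.2.2.1 k)).ne' q.2.2.2⟩
  exact Nat.card_of_isEmpty

theorem tau1k_eq_card_divisors_floorRoot {k n : ℕ} (hk : 1 ≤ k) (hn : n ≠ 0) :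
    tau1k k n = (Nat.floorRoot k n).divisors.card := by
  have hroot : Nat.floorRoot k n ≠ 0 :=
    Nat.floorRoot_ne_zero.mpr ⟨Nat.one_le_iff_ne_zero.mp hk, hn⟩
  have hinj : Function.Injective fun b => (n / b ^ k, b) := fun _ _ h => congrArg Prod.snd h
  refine (Nat.subtype_card ((Nat.floorRoot k n).divisors.image fun b => (n / b ^ k, b)) ?_).trans
    (card_image_of_injective _ hinj)
  rintro ⟨a, b⟩
  simp only [mem_image, Nat.mem_divisors, ← Nat.pow_dvd_iff_dvd_floorRoot, and_iff_left hroot,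
    Prod.mk.injEq, exists_eq_right_right]
  constructor
  · rintro ⟨hdvd, rfl⟩
    have hb : 0 < b ^ k := Nat.pos_of_dvd_of_pos hdvd (Nat.pos_of_ne_zero hn)
    exact ⟨Nat.div_pos (Nat.le_of_dvd (Nat.pos_of_ne_zero hn) hdvd) hb,
      Nat.pos_of_ne_zero fun h => by simp [h, Nat.one_le_iff_ne_zero.mp hk] at hb,
      Nat.div_mul_cancel hdvd⟩
  · rintro ⟨_, hb, rfl⟩
    exact ⟨dvd_mul_left _ _, Nat.mul_div_cancel a (pow_pos hb k)⟩

theorem tau1k_eq_prod_primeFactors {k n : ℕ} (hk : 1 ≤ k) (hn : n ≠ 0) :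
    tau1k k n = ∏ p ∈ n.primeFactors, (n.factorization p / k + 1) := by
  have hk0 : k ≠ 0 := Nat.one_le_iff_ne_zero.mp hk
  have hroot : Nat.floorRoot k n ≠ 0 := Nat.floorRoot_ne_zero.mpr ⟨hk0, hn⟩
  have hdvd : Nat.floorRoot k n ∣ n := (dvd_pow_self _ hk0).trans Nat.floorRoot_pow_dvd
  rw [tau1k_eq_card_divisors_floorRoot hk hn, Nat.card_divisors hroot]
  refine (prod_subset (Nat.primeFactors_mono hdvd hn) fun p _ hp => ?_).trans ?_
  · rw [← Nat.support_factorization, Finsupp.notMem_support_iff] at hp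
    rw [hp, zero_add]
  · simp

theorem eulerCoeff_degreeSeries_floorDivSeries {R : Type*} [CommSemiring R] {k : ℕ} (hk : 1 ≤ k)
    (q : ℕ × ℕ) :
    eulerCoeff (degreeSeries (floorDivSeries R k)) q = tau1k k (q.1 * q.2) := by
  rcases eq_or_ne (q.1 * q.2) 0 with hq | hq
  · rw [eulerCoeff_of_mul_eq_zero _ hq, hq, tau1k_zero, Nat.cast_zero]
  · rw [eulerCoeff_of_mul_ne_zero _ hq, tau1k_eq_prod_primeFactors hk hq, Nat.cast_prod]
    refine prod_congr rfl fun p _ => ?_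
    rw [coeff_degreeSeries, degree_bidegree, floorDivSeries, PowerSeries.coeff_mk,
      Nat.factorization_mul (left_ne_zero_of_mul hq) (right_ne_zero_of_mul hq), Finsupp.add_apply]

end TauSeries

section CorrectionSeries

section Ideals

variable {ι R : Type*} [CommRing R] {I : Ideal R}

theorem prod_one_sub_sub_one_sub_sum_mem_sq {s : Finset ι} {f : ι → R} (hf : ∀ i ∈ s, f i ∈ I) :
    ∏ i ∈ s, (1 - f i) - (1 - ∑ i ∈ s, f i) ∈ I ^ 2 := by
  classical
  induction s using Finset.induction_on with
  | empty => simp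
  | insert i s hi ih =>
    have hfs : ∑ j ∈ s, f j ∈ I := sum_mem fun j hj => hf j (mem_insert_of_mem hj)
    have hsq : f i * ∑ j ∈ s, f j ∈ I ^ 2 :=
      sq I ▸ Ideal.mul_mem_mul (hf i (mem_insert_self i s)) hfs
    rw [prod_insert hi, sum_insert hi]
    convert add_mem (Ideal.mul_mem_left _ (1 - f i) (ih fun j hj => hf j (mem_insert_of_mem hj)))
      hsq using 1
    ring

theorem one_add_sum_sub_sum_mul_prod_sub_one_mem_sq {s t : Finset ι} {f g : ι → R} {u : R}
    (hf : ∀ i ∈ s, f i ∈ I) (hg : ∀ i ∈ t, g i ∈ I) (hu : u * ∏ i ∈ t, (1 - g i) = 1) :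
    (1 + ∑ i ∈ s, f i - ∑ i ∈ t, g i) * (∏ i ∈ s, (1 - f i)) * u - 1 ∈ I ^ 2 := by
  have hsq : (∑ i ∈ s, f i) * (∑ i ∈ t, g i - ∑ i ∈ s, f i) ∈ I ^ 2 :=
    sq I ▸ Ideal.mul_mem_mul (sum_mem hf) (sub_mem (sum_mem hg) (sum_mem hf))
  convert Ideal.mul_mem_left _ u (sub_mem (add_mem (Ideal.mul_mem_left _
    (1 + ∑ i ∈ s, f i - ∑ i ∈ t, g i) (prod_one_sub_sub_one_sub_sum_mem_sq hf)) hsq)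
    (prod_one_sub_sub_one_sub_sum_mem_sq hg)) using 1
  linear_combination hu

end Ideals

/-- The ideal of power series all of whose monomials have total degree at least `n`. -/
def orderIdeal (σ R : Type*) [CommRing R] (n : ℕ∞) : Ideal (MvPowerSeries σ R) where
  carrier := {F | n ≤ F.order}
  add_mem' hF hG := (le_min hF hG).trans min_order_le_add
  zero_mem' := by simp
  smul_mem' F G hG := (le_add_left hG).trans le_order_mul

theorem orderIdeal_sq_le {σ R : Type*} [CommRing R] (n : ℕ∞) :
    orderIdeal σ R n ^ 2 ≤ orderIdeal σ R (2 * n) := by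
  rw [sq, Ideal.mul_le, two_mul]
  exact fun F hF G hG => (add_le_add hF hG).trans le_order_mul

variable {𝕜 : Type*} [NormedField 𝕜]

/-- The monomial `X₀ᵃ X₁ᵇ` as an element of the ring of absolutely convergent series. -/
noncomputable def bimonomial (a b : ℕ) : unitPolydiscSubring (Fin 2) 𝕜 :=
  ⟨monomial (bidegree (a, b)) 1, monomial_mem_unitPolydiscSubring _ 1⟩

theorem coe_bimonomial (a b : ℕ) :
    ((bimonomial a b : unitPolydiscSubring (Fin 2) 𝕜) : MvPowerSeries (Fin 2) 𝕜) =
      X 0 ^ a * X 1 ^ b := by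
  have hbidegree : bidegree (a, b) = Finsupp.single 0 a + Finsupp.single 1 b := by
    ext i; fin_cases i <;> simp [bidegree]
  rw [X_pow_eq, X_pow_eq, monomial_mul_monomial, one_mul, ← hbidegree, bimonomial]

theorem geometricSeries_mul_one_sub_bimonomial {a b : ℕ} (h : a + b ≠ 0) :
    geometricSeries (bidegree (a, b)) * (1 - bimonomial a b) =
      (1 : unitPolydiscSubring (Fin 2) 𝕜) :=
  geometricSeries_mul (bidegree_ne_zero h)

theorem bimonomial_mem_comap_orderIdeal {n : ℕ} {a b : ℕ} (h : n ≤ a + b) :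
    bimonomial a b ∈ (orderIdeal (Fin 2) 𝕜 n).comap (unitPolydiscSubring (Fin 2) 𝕜).subtype := by
  change (n : ℕ∞) ≤ (monomial (bidegree (a, b)) (1 : 𝕜)).order
  rw [order_monomial_of_ne_zero one_ne_zero, degree_bidegree]
  exact_mod_cast h

theorem prod_geometricSeries_mul_prod_one_sub_bimonomial {ι : Type*} {s : Finset ι} {a b : ι → ℕ}
    (h : ∀ i ∈ s, a i + b i ≠ 0) :
    (∏ i ∈ s, geometricSeries (bidegree (a i, b i))) * ∏ i ∈ s, (1 - bimonomial (a i) (b i)) =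
      (1 : unitPolydiscSubring (Fin 2) 𝕜) := by
  rw [← prod_mul_distrib]
  exact prod_eq_one fun i hi => geometricSeries_mul_one_sub_bimonomial (h i hi)

variable (𝕜)

/-- The numerator of the local factor of `∑ τ_{1,k}(mn) m⁻ᶻ n⁻ʷ`, written as a rational function of
`X₀ = p⁻ᶻ` and `X₁ = p⁻ʷ`. -/
noncomputable def tauNumerator (k : ℕ) : unitPolydiscSubring (Fin 2) 𝕜 :=
  1 + ∑ l ∈ Ico 1 k, bimonomial l (k - l) - ∑ l ∈ Icc 1 k, bimonomial l (k + 1 - l)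

/-- The local factor `∑ᵢⱼ (⌊(i + j) / k⌋ + 1) X₀ⁱ X₁ʲ` of `∑ τ_{1,k}(mn) m⁻ᶻ n⁻ʷ`, as a rational
function. -/
noncomputable def tauSeries (k : ℕ) : unitPolydiscSubring (Fin 2) 𝕜 :=
  tauNumerator 𝕜 k * (geometricSeries (bidegree (1, 0)) * geometricSeries (bidegree (0, 1)) *
    geometricSeries (bidegree (k, 0)) * geometricSeries (bidegree (0, k)))

/-- The local factor of the double Dirichlet series `H_k`: the factor of `∑ τ_{1,k}(mn) m⁻ᶻ n⁻ʷ`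
divided by the factors of the zeta functions, after cancelling
`(1 - X₀)(1 - X₁)(1 - X₀ᵏ)(1 - X₁ᵏ)`. -/
noncomputable def correctionSeries (k : ℕ) : unitPolydiscSubring (Fin 2) 𝕜 :=
  tauNumerator 𝕜 k * (∏ l ∈ Ico 1 k, (1 - bimonomial l (k - l))) *
    ∏ l ∈ Icc 1 k, geometricSeries (bidegree (l, k + 1 - l))

variable {k : ℕ}

theorem coe_tauSeries (hk : 1 ≤ k) :
    (tauSeries 𝕜 k : MvPowerSeries (Fin 2) 𝕜) = degreeSeries (floorDivSeries 𝕜 k) := by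
  have hN : (tauNumerator 𝕜 k : MvPowerSeries (Fin 2) 𝕜) =
      degreeSeries (floorDivSeries 𝕜 k) *
        ((1 - X 0) * (1 - X 1) * (1 - X 0 ^ k) * (1 - X 1 ^ k)) := by
    simp [tauNumerator, degreeSeries_floorDivSeries_mul hk, coe_bimonomial]
  have hgeom {a b : ℕ} (h : a + b ≠ 0) :
      ((geometricSeries (bidegree (a, b)) : unitPolydiscSubring (Fin 2) 𝕜) :
        MvPowerSeries (Fin 2) 𝕜) * (1 - X 0 ^ a * X 1 ^ b) = 1 := by
    rw [← coe_bimonomial]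
    exact congrArg Subtype.val (geometricSeries_mul_one_sub_bimonomial h)
  have h := congrArg₂ (· * ·)
    (congrArg₂ (· * ·) (hgeom (a := 1) (b := 0) one_ne_zero) (hgeom (a := 0) (b := 1) one_ne_zero))
    (congrArg₂ (· * ·) (hgeom (a := k) (b := 0) (by omega)) (hgeom (a := 0) (b := k) (by omega)))
  simp only [pow_zero, pow_one, mul_one, one_mul] at h
  simp only [tauSeries, Subring.coe_mul, hN]
  linear_combination degreeSeries (floorDivSeries 𝕜 k) * h

theorem tauSeries_mul_prod_geometricSeries (hk : 1 ≤ k) :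
    tauSeries 𝕜 k * ∏ l ∈ Icc 1 k, geometricSeries (bidegree (l, k + 1 - l)) =
      geometricSeries (bidegree (1, 0)) * geometricSeries (bidegree (0, 1)) *
        (∏ l ∈ range (k + 1), geometricSeries (bidegree (l, k - l))) * correctionSeries 𝕜 k := by
  have hinv : (∏ l ∈ Ico 1 k, geometricSeries (bidegree (l, k - l))) *
      ∏ l ∈ Ico 1 k, (1 - bimonomial l (k - l)) = (1 : unitPolydiscSubring (Fin 2) 𝕜) :=
    prod_geometricSeries_mul_prod_one_sub_bimonomial fun l hl => by
      have := (mem_Ico.mp hl).1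
      omega
  rw [prod_range_succ, prod_range_eq_mul_Ico _ hk, Nat.sub_zero, Nat.sub_self, tauSeries,
    correctionSeries]
  set G := fun a b => (geometricSeries (bidegree (a, b)) : unitPolydiscSubring (Fin 2) 𝕜)
  linear_combination -(tauNumerator 𝕜 k * G 1 0 * G 0 1 * G k 0 * G 0 k *
    ∏ l ∈ Icc 1 k, G l (k + 1 - l)) * hinv

theorem le_order_correctionSeries_sub_one (k : ℕ) :
    ((k + 2 : ℕ) : ℕ∞) ≤ ((correctionSeries 𝕜 k : MvPowerSeries (Fin 2) 𝕜) - 1).order := by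
  have hI := one_add_sum_sub_sum_mul_prod_sub_one_mem_sq
    (I := (orderIdeal (Fin 2) 𝕜 (max k 2 : ℕ)).comap (unitPolydiscSubring (Fin 2) 𝕜).subtype)
    (s := Ico 1 k) (t := Icc 1 k)
    (f := fun l => bimonomial l (k - l)) (g := fun l => bimonomial l (k + 1 - l))
    (fun l hl => bimonomial_mem_comap_orderIdeal (by have := mem_Ico.mp hl; omega))
    (fun l hl => bimonomial_mem_comap_orderIdeal (by have := mem_Icc.mp hl; omega))
    (prod_geometricSeries_mul_prod_one_sub_bimonomial fun l hl => by
      have := mem_Icc.mp hl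
      omega)
  have horder : 2 * ((max k 2 : ℕ) : ℕ∞) ≤
      ((correctionSeries 𝕜 k : MvPowerSeries (Fin 2) 𝕜) - 1).order :=
    orderIdeal_sq_le _ (Ideal.le_comap_pow _ 2 hI)
  refine le_trans ?_ horder
  exact_mod_cast (by omega : k + 2 ≤ 2 * max k 2)

end CorrectionSeries

section DoubleDirichletSeries

variable {z w : ℂ}

theorem one_lt_re_natCast_mul_add_natCast_mul (hz : 1 < z.re) (hw : 1 < w.re) {a b : ℕ}
    (hab : a + b ≠ 0) : 1 < ((a : ℂ) * z + (b : ℂ) * w).re := by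
  have hab' : (1 : ℝ) ≤ a + b := mod_cast Nat.one_le_iff_ne_zero.mpr hab
  have hre : ((a : ℂ) * z + (b : ℂ) * w).re = a * z.re + b * w.re := by simp
  have hm : 1 < min z.re w.re := lt_min hz hw
  calc 1 < min z.re w.re := hm
    _ ≤ (a + b) * min z.re w.re := le_mul_of_one_le_left (one_pos.trans hm).le hab'
    _ = a * min z.re w.re + b * min z.re w.re := add_mul ..
    _ ≤ a * z.re + b * w.re := by
        gcongr
        exacts [min_le_left .., min_le_right ..]
    _ = _ := hre.symm

theorem hasProd_evalUnitPolydisc_geometricSeries (hz : 1 < z.re) (hw : 1 < w.re) {a b : ℕ}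
    (hab : a + b ≠ 0) :
    HasProd (fun p : Nat.Primes => evalUnitPolydisc _
        (norm_primePoint_lt_one (one_pos.trans hz) (one_pos.trans hw) p.2)
        (geometricSeries (bidegree (a, b))))
      (riemannZeta (a * z + b * w)) := by
  convert riemannZeta_eulerProduct_hasProd (one_lt_re_natCast_mul_add_natCast_mul hz hw hab)
    using 2 with p
  have hp : (p : ℂ) ≠ 0 := Nat.cast_ne_zero.mpr p.2.ne_zero
  rw [evalUnitPolydisc_geometricSeries, prod_bidegree]
  change (1 - ((p : ℂ) ^ (-z)) ^ a * ((p : ℂ) ^ (-w)) ^ b)⁻¹ = _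
  rw [← Complex.cpow_nat_mul, ← Complex.cpow_nat_mul, ← Complex.cpow_add _ _ hp, mul_neg, mul_neg,
    neg_add]

theorem constantCoeff_tauSeries {k : ℕ} (hk : 1 ≤ k) :
    constantCoeff (tauSeries ℂ k : MvPowerSeries (Fin 2) ℂ) = 1 := by
  rw [coe_tauSeries ℂ hk, ← coeff_zero_eq_constantCoeff_apply, coeff_degreeSeries, map_zero,
    floorDivSeries, PowerSeries.coeff_mk, Nat.zero_div, zero_add, Nat.cast_one]

theorem constantCoeff_correctionSeries (k : ℕ) :
    constantCoeff (correctionSeries ℂ k : MvPowerSeries (Fin 2) ℂ) = 1 :=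
  one_le_order_sub_one_iff.mp <|
    le_trans (mod_cast Nat.le_add_left 1 (k + 1)) (le_order_correctionSeries_sub_one ℂ k)

theorem tsum_tau1k_mul_prod_riemannZeta {k : ℕ} (hk : 1 ≤ k) (hz : 1 < z.re) (hw : 1 < w.re) :
    (∑' q : ℕ × ℕ, (tau1k k (q.1 * q.2) : ℂ) * (q.1 : ℂ) ^ (-z) * (q.2 : ℂ) ^ (-w)) *
        ∏ l ∈ Icc 1 k, riemannZeta ((l : ℂ) * z + ((k + 1 - l : ℕ) : ℂ) * w) =
      riemannZeta z * riemannZeta w *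
        (∏ l ∈ range (k + 1), riemannZeta ((l : ℂ) * z + ((k - l : ℕ) : ℂ) * w)) *
        ∑' q : ℕ × ℕ, eulerCoeff (correctionSeries ℂ k : MvPowerSeries (Fin 2) ℂ) q *
          (q.1 : ℂ) ^ (-z) * (q.2 : ℂ) ^ (-w) := by
  have hzeta {a b : ℕ} (hab : a + b ≠ 0) :=
    hasProd_evalUnitPolydisc_geometricSeries hz hw hab
  have hleft := (hasProd_evalUnitPolydisc _ hz hw (constantCoeff_tauSeries hk)).mul <|
    hasProd_prod fun l (hl : l ∈ Icc 1 k) => hzeta (a := l) (b := k + 1 - l) <| by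
      have := mem_Icc.mp hl
      omega
  have hright := (((hzeta (a := 1) (b := 0) one_ne_zero).mul
    (hzeta (a := 0) (b := 1) one_ne_zero)).mul <|
    hasProd_prod fun l (_ : l ∈ range (k + 1)) => hzeta (a := l) (b := k - l) (by omega)).mul
      (hasProd_evalUnitPolydisc _ hz hw (constantCoeff_correctionSeries k))
  simp only [← map_prod, ← map_mul, ← tauSeries_mul_prod_geometricSeries ℂ hk] at hleft hright
  simpa only [coe_tauSeries ℂ hk, eulerCoeff_degreeSeries_floorDivSeries hk, Nat.cast_one,
    Nat.cast_zero, one_mul, zero_mul, add_zero, zero_add] using hleft.unique hright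

end DoubleDirichletSeries

/-- For `k ≥ 1` there is a double Dirichlet series `H_k(z,w) = ∑ h(m,n) m^{-z} n^{-w}`,
absolutely convergent for `Re z, Re w > 1/(k+2)`, such that for `Re z, Re w > 1`,
`∑_{m,n ≥ 1} τ_{1,k}(mn) m^{-z} n^{-w} = ζ(z) ζ(w)
  (∏_{l=0}^k ζ(lz+(k-l)w)) / (∏_{l=1}^k ζ(lz+(k+1-l)w)) · H_k(z,w)`. -/
theorem tau1k_double_dirichlet_series (k : ℕ) (hk : 1 ≤ k) :
    ∃ h : ℕ × ℕ → ℂ,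
      (∀ σ₁ σ₂ : ℝ, 1 / (k + 2 : ℝ) < σ₁ → 1 / (k + 2 : ℝ) < σ₂ →
        Summable (fun q : ℕ × ℕ => ‖h q‖ * (q.1 : ℝ) ^ (-σ₁) * (q.2 : ℝ) ^ (-σ₂))) ∧
      ∀ z w : ℂ, 1 < z.re → 1 < w.re →
        ∑' q : ℕ × ℕ, (tau1k k (q.1 * q.2) : ℂ) * (q.1 : ℂ) ^ (-z) * (q.2 : ℂ) ^ (-w) =
          riemannZeta z * riemannZeta w *
            ((∏ l ∈ Finset.range (k + 1), riemannZeta ((l : ℂ) * z + ((k - l : ℕ) : ℂ) * w)) /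
              ∏ l ∈ Finset.Icc 1 k, riemannZeta ((l : ℂ) * z + ((k + 1 - l : ℕ) : ℂ) * w)) *
            ∑' q : ℕ × ℕ, h q * (q.1 : ℂ) ^ (-z) * (q.2 : ℂ) ^ (-w) := by
  refine ⟨eulerCoeff (correctionSeries ℂ k : MvPowerSeries (Fin 2) ℂ), fun σ₁ σ₂ h₁ h₂ => ?_,
    fun z w hz hw => ?_⟩
  · have hσ {σ : ℝ} (h : 1 / (k + 2 : ℝ) < σ) : 1 < ((k + 2 : ℕ) : ℝ) * σ := by
      push_cast
      exact (div_lt_iff₀' (by positivity)).mp h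
    exact summable_norm_eulerCoeff_mul_rpow (correctionSeries ℂ k).2
      (le_order_correctionSeries_sub_one ℂ k) (hσ h₁) (hσ h₂)
  · have hne : ∏ l ∈ Icc 1 k, riemannZeta ((l : ℂ) * z + ((k + 1 - l : ℕ) : ℂ) * w) ≠ 0 :=
      prod_ne_zero_iff.mpr fun l hl => riemannZeta_ne_zero_of_one_lt_re <|
        one_lt_re_natCast_mul_add_natCast_mul hz hw (by have := mem_Icc.mp hl; omega)
    rw [eq_div_of_mul_eq hne (tsum_tau1k_mul_prod_riemannZeta hk hz hw)]
    ring
end
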